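/- arXiv:2401.08489 — 2 statements merged into one kernel-verified Lean document; each statement's English description precedes it below -/
import Mathlib

section
/- Let 𝔤 be the simple complex Lie algebra of type G₂, with short simple root α₁ and long simple root α₂. Let μ and ν be dominant integral weights with β := ν̄ − μ a root. If either (a) ⟨μ, α₁∨⟩ = 0 and β = −(α₁ + α₂) or β = 2α₁ + α₂, or (b) ⟨μ, α₁∨⟩ = 1 and β = α₁ + α₂ or β = −(2α₁ + α₂), then the 𝔤-invariant subspace of adj(𝔤) ⊗ V_μ ⊗ V_ν is zero. -/
open scoped TensorProduct Classical
open LieAlgebra LieModule Module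

namespace AdjPaper

variable {L : Type} [LieRing L] [LieAlgebra ℂ L]

/-- `χ` is a root of `L` relative to the Cartan subalgebra `H`: a nonzero linear functional
on `H` with nontrivial root space. -/
def IsRoot (H : LieSubalgebra ℂ L) [H.IsCartanSubalgebra] (χ : Module.Dual ℂ H) : Prop :=
  χ ≠ 0 ∧ rootSpace H ⇑χ ≠ ⊥

/-- `t` is the coroot `χ∨` of the root `χ`: it lies in `⁅𝔤_χ, 𝔤_{-χ}⁆` and satisfies
`χ t = 2`. -/
def IsCoroot (H : LieSubalgebra ℂ L) [H.IsCartanSubalgebra] (χ : Module.Dual ℂ H) (t : H) : Prop :=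
  χ t = 2 ∧ ∃ e ∈ rootSpace H ⇑χ, ∃ f ∈ rootSpace H ⇑(-χ), (t : L) = ⁅e, f⁆

/-- `α` enumerates the simple roots of a base of the root system of `(L, H)`. -/
structure IsBase (H : LieSubalgebra ℂ L) [H.IsCartanSubalgebra] {r : ℕ} (α : Fin r → Module.Dual ℂ H) : Prop where
  isRoot : ∀ j, IsRoot H (α j)
  indep : LinearIndependent ℂ α
  pos_neg : ∀ χ : Module.Dual ℂ H, IsRoot H χ →
    (∃ c : Fin r → ℕ, χ = ∑ j, (c j : ℂ) • α j) ∨ (∃ c : Fin r → ℕ, χ = -∑ j, (c j : ℂ) • α j)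

/-- `χ` is a positive root relative to the base `α`. -/
def IsPosRoot (H : LieSubalgebra ℂ L) [H.IsCartanSubalgebra] {r : ℕ} (α : Fin r → Module.Dual ℂ H)
    (χ : Module.Dual ℂ H) : Prop :=
  IsRoot H χ ∧ ∃ c : Fin r → ℕ, χ = ∑ j, (c j : ℂ) • α j

/-- A weight `μ` is dominant integral: all its pairings `⟨μ, α_j∨⟩ = μ (hc j)` with the
simple coroots `hc j` are non-negative integers. -/
def IsDomInt {H : LieSubalgebra ℂ L} {r : ℕ} (hc : Fin r → H) (μ : Module.Dual ℂ H) : Prop :=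
  ∀ j, ∃ n : ℕ, μ (hc j) = (n : ℂ)

/-- `V` is an irreducible `L`-module with highest weight `μ` (relative to the Cartan
subalgebra `H` and the base `α`): it is irreducible and possesses a nonzero vector of
`H`-weight `μ` annihilated by all positive root spaces. -/
def IsHWIrrep (H : LieSubalgebra ℂ L) [H.IsCartanSubalgebra] {r : ℕ} (α : Fin r → Module.Dual ℂ H)
    (μ : Module.Dual ℂ H) (V : Type) [AddCommGroup V] [Module ℂ V]
    [LieRingModule L V] [LieModule ℂ L V] : Prop :=
  IsSimpleOrder (LieSubmodule ℂ L V) ∧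
  ∃ v : V, v ≠ 0 ∧ (∀ x : H, ⁅(x : L), v⁆ = μ x • v) ∧
    ∀ χ : Module.Dual ℂ H, IsPosRoot H α χ → ∀ e ∈ rootSpace H ⇑χ, ⁅e, v⁆ = 0

/-- `W` is isomorphic to the dual representation `V*`: there is a nondegenerate
`𝔤`-invariant pairing `W × V → ℂ`. -/
def IsDualPair (W V : Type) [AddCommGroup W] [Module ℂ W] [LieRingModule L W]
    [AddCommGroup V] [Module ℂ V] [LieRingModule L V] : Prop :=
  ∃ B : W →ₗ[ℂ] V →ₗ[ℂ] ℂ,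
    (∀ w, (∀ v, B w v = 0) → w = 0) ∧ (∀ v, (∀ w, B w v = 0) → v = 0) ∧
    ∀ (x : L) (w : W) (v : V), B ⁅x, w⁆ v + B w ⁅x, v⁆ = 0

/-- `V` is an orthogonal representation: it has a nondegenerate invariant symmetric
bilinear form. -/
def IsOrthogonalRep (V : Type) [AddCommGroup V] [Module ℂ V] [LieRingModule L V] : Prop :=
  ∃ B : V →ₗ[ℂ] V →ₗ[ℂ] ℂ,
    (∀ v w, B v w = B w v) ∧ (∀ v, (∀ w, B v w = 0) → v = 0) ∧
    ∀ (x : L) (v w : V), B ⁅x, v⁆ w + B v ⁅x, w⁆ = 0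

/-- `V` is a symplectic representation: it has a nondegenerate invariant alternating
bilinear form. -/
def IsSymplecticRep (V : Type) [AddCommGroup V] [Module ℂ V] [LieRingModule L V] : Prop :=
  ∃ B : V →ₗ[ℂ] V →ₗ[ℂ] ℂ,
    (∀ v, B v v = 0) ∧ (∀ v, (∀ w, B v w = 0) → v = 0) ∧
    ∀ (x : L) (v w : V), B ⁅x, v⁆ w + B v ⁅x, w⁆ = 0

variable (L) in
/-- The operator on `adj(𝔤) ⊗ V ⊗ V` exchanging the two copies of `V`. -/
noncomputable def swapMap (V : Type) [AddCommGroup V] [Module ℂ V] :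
    (L ⊗[ℂ] (V ⊗[ℂ] V)) →ₗ[ℂ] (L ⊗[ℂ] (V ⊗[ℂ] V)) :=
  LinearMap.lTensor L (TensorProduct.comm ℂ V V).toLinearMap

variable (L) in
/-- The `𝔤`-invariant subspace of `adj(𝔤) ⊗ S²V`, realised inside `adj(𝔤) ⊗ V ⊗ V` as the
invariant vectors fixed by the swap of the two copies of `V`. -/
noncomputable def symSquareInvariants (V : Type) [AddCommGroup V] [Module ℂ V]
    [LieRingModule L V] [LieModule ℂ L V] : Submodule ℂ (L ⊗[ℂ] (V ⊗[ℂ] V)) :=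
  (maxTrivSubmodule ℂ L (L ⊗[ℂ] (V ⊗[ℂ] V)) : Submodule ℂ (L ⊗[ℂ] (V ⊗[ℂ] V))) ⊓
    LinearMap.ker (swapMap L V - LinearMap.id)

variable (L) in
/-- The `𝔤`-invariant subspace of `adj(𝔤) ⊗ Λ²V`, realised inside `adj(𝔤) ⊗ V ⊗ V` as the
invariant vectors anti-fixed by the swap of the two copies of `V`. -/
noncomputable def altSquareInvariants (V : Type) [AddCommGroup V] [Module ℂ V]
    [LieRingModule L V] [LieModule ℂ L V] : Submodule ℂ (L ⊗[ℂ] (V ⊗[ℂ] V)) :=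
  (maxTrivSubmodule ℂ L (L ⊗[ℂ] (V ⊗[ℂ] V)) : Submodule ℂ (L ⊗[ℂ] (V ⊗[ℂ] V))) ⊓
    LinearMap.ker (swapMap L V + LinearMap.id)

/-!
An invariant of `adj(𝔤) ⊗ V_μ ⊗ V_ν` is a homomorphism `V_ν* → adj(𝔤) ⊗ V_μ`, determined by the
image `u` of a highest weight vector, so it suffices that `adj(𝔤) ⊗ V_μ` has no highest weight
vector of weight `ν̄`. Contract such a `u` with the lowest weight functional of `V_μ`, of weight
`-μ`: the result `x ∈ adj(𝔤)` lies in the root space of `β = ν̄ - μ`. It is nonzero, since the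
`V_μ`-components of `u` span a subspace stable under the positive root spaces, which cannot lie in
the kernel of a lowest weight functional. On the other hand `e₁ ^ (⟨μ, α₁∨⟩ + 1)` kills the
functional, hence also `x`. By `sl₂`-theory this power of `e₁` does not kill the root space of `β`
when the `α₁`-string through `β` continues at least `⟨μ, α₁∨⟩ + 1` steps upwards.
-/

section Contraction

variable {R 𝔤 M V N : Type*} [CommRing R] [LieRing 𝔤] [LieAlgebra R 𝔤]
  [AddCommGroup M] [Module R M] [AddCommGroup V] [Module R V] [AddCommGroup N] [Module R N]

variable (R M V) in
/-- Contraction of the right factor of `M ⊗ V` with a functional: `ξ ↦ (m ⊗ v ↦ ξ v • m)`. -/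
noncomputable def contractRight : Module.Dual R V →ₗ[R] M ⊗[R] V →ₗ[R] M :=
  (TensorProduct.rid R M).toLinearMap.compRight R ∘ₗ LinearMap.lTensorHom M

variable (R M V) in
/-- Contraction of the left factor of `M ⊗ V` with a functional: `θ ↦ (m ⊗ v ↦ θ m • v)`. -/
noncomputable def contractLeft : Module.Dual R M →ₗ[R] M ⊗[R] V →ₗ[R] V :=
  (TensorProduct.lid R V).toLinearMap.compRight R ∘ₗ LinearMap.rTensorHom V

@[simp]
lemma contractRight_tmul (ξ : Module.Dual R V) (m : M) (v : V) :
    contractRight R M V ξ (m ⊗ₜ v) = ξ v • m := by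
  simp [contractRight]

@[simp]
lemma contractLeft_tmul (θ : Module.Dual R M) (m : M) (v : V) :
    contractLeft R M V θ (m ⊗ₜ v) = θ m • v := by
  simp [contractLeft]

lemma apply_contractRight (θ : Module.Dual R M) (ξ : Module.Dual R V) (u : M ⊗[R] V) :
    θ (contractRight R M V ξ u) = ξ (contractLeft R M V θ u) := by
  induction u with
  | zero => simp only [map_zero]
  | tmul m v => simp [mul_comm]
  | add u₁ u₂ h₁ h₂ => simp only [map_add, h₁, h₂]

lemma eq_zero_of_contractLeft_eq_zero [Module.Free R M] {u : M ⊗[R] V}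
    (hu : ∀ θ : Module.Dual R M, contractLeft R M V θ u = 0) : u = 0 := by
  let b := Module.Free.chooseBasis R M
  apply (TensorProduct.equivFinsuppOfBasisLeft (N := V) b).injective
  ext i
  rw [TensorProduct.equivFinsuppOfBasisLeft_apply, map_zero, Finsupp.zero_apply]
  exact hu (b.coord i)

lemma eq_zero_of_contractRight_eq_zero [Module.Free R M] {Ξ : Set (Module.Dual R V)}
    (hΞ : ∀ v, (∀ ξ ∈ Ξ, ξ v = 0) → v = 0) {u : M ⊗[R] V}
    (hu : ∀ ξ ∈ Ξ, contractRight R M V ξ u = 0) : u = 0 :=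
  eq_zero_of_contractLeft_eq_zero fun θ ↦ hΞ _ fun ξ hξ ↦ by
    rw [← apply_contractRight, hu ξ hξ, map_zero]

variable [LieRingModule 𝔤 M] [LieModule R 𝔤 M] [LieRingModule 𝔤 V] [LieModule R 𝔤 V]
  [LieRingModule 𝔤 N] [LieModule R 𝔤 N]

lemma lie_contractRight (x : 𝔤) (ξ : Module.Dual R V) (u : M ⊗[R] V) :
    ⁅x, contractRight R M V ξ u⁆ = contractRight R M V ⁅x, ξ⁆ u + contractRight R M V ξ ⁅x, u⁆ := by
  induction u with
  | zero => simp only [map_zero, lie_zero, add_zero]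
  | tmul m v => simp [TensorProduct.LieModule.lie_tmul_right]
  | add u₁ u₂ h₁ h₂ => simp only [map_add, lie_add, h₁, h₂]; abel

lemma toEnd_pow_contractRight {x : 𝔤} {u : M ⊗[R] V} (hu : ⁅x, u⁆ = 0) (ξ : Module.Dual R V)
    (k : ℕ) :
    (toEnd R 𝔤 M x ^ k) (contractRight R M V ξ u) =
      contractRight R M V ((toEnd R 𝔤 (Module.Dual R V) x ^ k) ξ) u := by
  induction k with
  | zero => rfl
  | succ k ih =>
    simp only [pow_succ', Module.End.mul_apply, toEnd_apply_apply, ih, lie_contractRight, hu,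
      map_zero, add_zero]

lemma lie_contractLeft (x : 𝔤) (θ : Module.Dual R M) (u : M ⊗[R] V) :
    ⁅x, contractLeft R M V θ u⁆ = contractLeft R M V ⁅x, θ⁆ u + contractLeft R M V θ ⁅x, u⁆ := by
  induction u with
  | zero => simp only [map_zero, lie_zero, add_zero]
  | tmul m v => simp [TensorProduct.LieModule.lie_tmul_right]
  | add u₁ u₂ h₁ h₂ => simp only [map_add, lie_add, h₁, h₂]; abel

lemma lie_assoc_symm (x : 𝔤) (t : M ⊗[R] (V ⊗[R] N)) :
    ⁅x, (TensorProduct.assoc R M V N).symm t⁆ = (TensorProduct.assoc R M V N).symm ⁅x, t⁆ := by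
  induction t with
  | zero => simp only [map_zero, lie_zero]
  | add t₁ t₂ h₁ h₂ => simp only [map_add, lie_add, h₁, h₂]
  | tmul m s =>
    induction s with
    | zero => simp only [TensorProduct.tmul_zero, map_zero, lie_zero]
    | add s₁ s₂ h₁ h₂ => simp only [TensorProduct.tmul_add, map_add, lie_add, h₁, h₂]
    | tmul v n =>
      simp [TensorProduct.LieModule.lie_tmul_right, TensorProduct.add_tmul, TensorProduct.tmul_add,
        add_assoc]

end Contraction

section Between

variable {R 𝔤 V : Type*} [CommRing R] [LieRing 𝔤] [LieAlgebra R 𝔤]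
  [AddCommGroup V] [Module R V] [LieRingModule 𝔤 V] [LieModule R 𝔤 V]

lemma exists_lieSubmodule_between {P B : Set 𝔤} (hPB : Submodule.span R (P ∪ B) = ⊤)
    {S Q : Submodule R V} (hSQ : S ≤ Q) (hS : ∀ e ∈ P, ∀ v ∈ S, ⁅e, v⁆ ∈ S)
    (hQ : ∀ b ∈ B, ∀ v ∈ Q, ⁅b, v⁆ ∈ Q) :
    ∃ N : LieSubmodule R 𝔤 V, S ≤ N.toSubmodule ∧ N.toSubmodule ≤ Q := by
  let 𝒮 : Set (Submodule R V) := {T | T ≤ Q ∧ ∀ e ∈ P, T ≤ T.comap (toEnd R 𝔤 V e)}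
  let N := sSup 𝒮
  have hNQ : N ≤ Q := sSup_le fun T hT ↦ hT.1
  have hNP : ∀ e ∈ P, ∀ v ∈ N, ⁅e, v⁆ ∈ N := fun e he ↦ show N ≤ N.comap (toEnd R 𝔤 V e) from
    sSup_le fun T hT ↦ (hT.2 e he).trans (Submodule.comap_mono (le_sSup hT))
  have hlieQ : ∀ (x : 𝔤), ∀ v ∈ N, ⁅x, v⁆ ∈ Q := fun x v hv ↦ by
    have hx : x ∈ Submodule.span R (P ∪ B) := hPB ▸ Submodule.mem_top
    induction hx using Submodule.span_induction with
    | mem x hx => exact hx.elim (fun hx ↦ hNQ (hNP x hx v hv)) (fun hx ↦ hQ x hx v (hNQ hv))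
    | zero => simp only [zero_lie, zero_mem]
    | add x y _ _ hx hy => simpa only [add_lie] using add_mem hx hy
    | smul c x _ hx => simpa only [smul_lie] using Q.smul_mem c hx
  let D : Submodule R V := Submodule.span R {w | ∃ x : 𝔤, ∃ v ∈ N, ⁅x, v⁆ = w}
  -- `N` is the largest `P`-stable subspace of `Q`, so it contains the `P`-stable `𝔤 N ≤ Q`.
  have hD : D ∈ 𝒮 := by
    refine ⟨Submodule.span_le.mpr ?_, fun e he ↦ Submodule.span_le.mpr ?_⟩
    · rintro _ ⟨x, v, hv, rfl⟩
      exact hlieQ x v hv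
    · rintro _ ⟨x, v, hv, rfl⟩
      change ⁅e, ⁅x, v⁆⁆ ∈ D
      rw [leibniz_lie]
      exact add_mem (Submodule.subset_span ⟨_, v, hv, rfl⟩)
        (Submodule.subset_span ⟨x, _, hNP e he v hv, rfl⟩)
  exact ⟨⟨N, fun {x v} hv ↦ le_sSup hD (Submodule.subset_span ⟨x, v, hv, rfl⟩)⟩,
    le_sSup ⟨hSQ, hS⟩, hNQ⟩

lemma eq_bot_or_eq_top_of_le [IsSimpleOrder (LieSubmodule R 𝔤 V)] {P B : Set 𝔤}
    (hPB : Submodule.span R (P ∪ B) = ⊤) {S Q : Submodule R V} (hSQ : S ≤ Q)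
    (hS : ∀ e ∈ P, ∀ v ∈ S, ⁅e, v⁆ ∈ S) (hQ : ∀ b ∈ B, ∀ v ∈ Q, ⁅b, v⁆ ∈ Q) :
    S = ⊥ ∨ Q = ⊤ := by
  obtain ⟨N, hSN, hNQ⟩ := exists_lieSubmodule_between hPB hSQ hS hQ
  rcases eq_bot_or_eq_top N with rfl | rfl
  · exact .inl (le_bot_iff.mp hSN)
  · exact .inr (top_le_iff.mp hNQ)

end Between

section Sl2

variable {K 𝔤 V : Type*} [Field K] [CharZero K] [LieRing 𝔤] [LieAlgebra K 𝔤]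
  [AddCommGroup V] [Module K V] [LieRingModule 𝔤 V] [LieModule K 𝔤 V]

lemma toEnd_e_pow_toEnd_f_pow_ne_zero {h e f : 𝔤} {t : IsSl2Triple h e f} {v : V} {n : ℕ}
    (P : t.HasPrimitiveVectorWith v (n : K)) {k l : ℕ} (hk : k ≤ n) (hl : l ≤ k) :
    (toEnd K 𝔤 V e ^ l) ((toEnd K 𝔤 V f ^ k) v) ≠ 0 := by
  induction l generalizing k with
  | zero => exact P.pow_toEnd_f_ne_zero_of_eq_nat rfl hk
  | succ l ih =>
    obtain ⟨k, rfl⟩ : ∃ k', k = k' + 1 := ⟨k - 1, by omega⟩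
    rw [pow_succ, Module.End.mul_apply, toEnd_apply_apply, P.lie_e_pow_succ_toEnd_f, map_smul]
    have hkn : (n : K) - k ≠ 0 := sub_ne_zero.mpr (by norm_cast; omega)
    exact smul_ne_zero (mul_ne_zero k.cast_add_one_ne_zero hkn) (ih (by omega) (by omega))

end Sl2

section Roots

variable {H : LieSubalgebra ℂ L} [H.IsCartanSubalgebra]

lemma IsRoot.exists_mem_rootSpace_ne_zero {χ : Module.Dual ℂ H} (hχ : IsRoot H χ) :
    ∃ x ∈ rootSpace H ⇑χ, x ≠ 0 := by
  by_contra! h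
  exact hχ.2 ((LieSubmodule.eq_bot_iff _).mpr h)

lemma isRoot_of_mem_rootSpace {χ : Module.Dual ℂ H} (hχ : χ ≠ 0) {x : L}
    (hx : x ∈ rootSpace H ⇑χ) (hx0 : x ≠ 0) : IsRoot H χ :=
  ⟨hχ, fun h ↦ hx0 ((LieSubmodule.eq_bot_iff _).mp h x hx)⟩

lemma lie_mem_rootSpace_add {χ ψ : Module.Dual ℂ H} {x y : L} (hx : x ∈ rootSpace H ⇑χ)
    (hy : y ∈ rootSpace H ⇑ψ) : ⁅x, y⁆ ∈ rootSpace H ⇑(χ + ψ) :=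
  LieAlgebra.lie_mem_genWeightSpace_of_mem_genWeightSpace hx hy

lemma toEnd_pow_mem_rootSpace {χ ψ : Module.Dual ℂ H} {x y : L} (hx : x ∈ rootSpace H ⇑χ)
    (hy : y ∈ rootSpace H ⇑ψ) (k : ℕ) :
    (toEnd ℂ L L x ^ k) y ∈ rootSpace H ⇑(k • χ + ψ) :=
  LieAlgebra.toEnd_pow_apply_mem hx hy k

lemma mem_rootSpace_of_forall_lie_eq_smul {χ : Module.Dual ℂ H} {x : L}
    (hx : ∀ t : H, ⁅(t : L), x⁆ = χ t • x) : x ∈ rootSpace H ⇑χ :=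
  weightSpace_le_genWeightSpace L _ ((mem_weightSpace _ x).mpr hx)

lemma IsRoot.exists_weight {χ : Module.Dual ℂ H} (hχ : IsRoot H χ) :
    ∃ w : Weight ℂ H L, w.IsNonZero ∧ ⇑w = ⇑χ :=
  ⟨⟨χ, hχ.2⟩, fun h ↦ hχ.1 (DFunLike.coe_injective h), rfl⟩

variable [FiniteDimensional ℂ L] [LieAlgebra.IsKilling ℂ L]

lemma lie_eq_smul_of_mem_rootSpace {χ : Module.Dual ℂ H} {x : L} (hx : x ∈ rootSpace H ⇑χ)
    (t : H) : ⁅(t : L), x⁆ = χ t • x :=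
  LieAlgebra.IsKilling.lie_eq_smul_of_mem_rootSpace hx t

lemma IsRoot.neg {χ : Module.Dual ℂ H} (hχ : IsRoot H χ) : IsRoot H (-χ) := by
  obtain ⟨w, -, hw⟩ := hχ.exists_weight
  refine ⟨neg_ne_zero.mpr hχ.1, ?_⟩
  have := (-w).genWeightSpace_ne_bot
  rwa [Weight.coe_neg, hw] at this

lemma IsRoot.smul_eq_neg_or_eq {χ : Module.Dual ℂ H} (hχ : IsRoot H χ) {c : ℂ}
    (hc : IsRoot H (c • χ)) : c • χ = -χ ∨ c • χ = χ := by
  obtain ⟨w, -, hw⟩ := hχ.exists_weight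
  obtain ⟨w', hw'_ne, hw'⟩ := hc.exists_weight
  have hww' : ⇑w' = c • ⇑w := by rw [hw', hw]; rfl
  refine (LieAlgebra.IsKilling.eq_neg_or_eq_of_eq_smul w w' hw'_ne c hww').imp ?_ ?_ <;>
    refine fun h ↦ DFunLike.coe_injective ?_
  · rw [← hw', h, Weight.coe_neg, hw]; rfl
  · rw [← hw', h, hw]

lemma exists_smul_eq_of_mem_rootSpace {χ : Module.Dual ℂ H} (hχ : χ ≠ 0) {x y : L}
    (hx : x ∈ rootSpace H ⇑χ) (hx0 : x ≠ 0) (hy : y ∈ rootSpace H ⇑χ) : ∃ c : ℂ, c • x = y := by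
  obtain ⟨w, hw0, hw⟩ := (isRoot_of_mem_rootSpace hχ hx hx0).exists_weight
  rw [← hw] at hx hy
  have hdim := LieAlgebra.IsKilling.finrank_rootSpace_eq_one w hw0
  obtain ⟨c, hc⟩ := (finrank_eq_one_iff_of_nonzero' (⟨x, hx⟩ : rootSpace H w)
    (fun h ↦ hx0 (congrArg Subtype.val h))).mp hdim ⟨y, hy⟩
  exact ⟨c, congrArg Subtype.val hc⟩

lemma IsCoroot.exists_isSl2Triple {χ : Module.Dual ℂ H} {t : H} (ht : IsCoroot H χ t) :
    ∃ e ∈ rootSpace H ⇑χ, ∃ f ∈ rootSpace H ⇑(-χ), IsSl2Triple (t : L) e f := by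
  obtain ⟨h2, e, he, f, hf, hef⟩ := ht
  refine ⟨e, he, f, hf, ?_, hef.symm, ?_, ?_⟩
  · rintro h0
    rw [show t = 0 from Subtype.ext h0, map_zero] at h2
    exact two_ne_zero h2.symm
  · rw [lie_eq_smul_of_mem_rootSpace he, h2, two_smul, two_nsmul]
  · rw [lie_eq_smul_of_mem_rootSpace hf, LinearMap.neg_apply, h2, neg_smul, two_smul, two_nsmul]

end Roots

section Base

variable {H : LieSubalgebra ℂ L} [H.IsCartanSubalgebra] {r : ℕ} {α : Fin r → Module.Dual ℂ H}

variable (α) in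
/-- The union of the root spaces of the positive roots. -/
def positiveRootVectors : Set L := {e | ∃ χ, IsPosRoot H α χ ∧ e ∈ rootSpace H ⇑χ}

variable (α) in
/-- The union of `H` and the root spaces of the negative roots, which spans the Borel subalgebra
opposite to `α`. -/
def oppositeBorelVectors : Set L :=
  {b | b ∈ H ∨ ∃ χ, IsPosRoot H α χ ∧ b ∈ rootSpace H ⇑(-χ)}

lemma IsBase.exists_fundamentalCoweights (hα : IsBase H α) :
    ∃ ω : Fin r → H, ∀ i j, α i (ω j) = if i = j then 1 else 0 := by
  have hspan : Submodule.span ℂ (Set.range (LinearMap.pi α)) = ⊤ :=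
    span_flip_eq_top_iff_linearIndependent.mpr
      (hα.indep.map' (LinearMap.ltoFun ℂ H ℂ ℂ) (LinearMap.ker_eq_bot.mpr DFunLike.coe_injective))
  rw [← LinearMap.coe_range, Submodule.span_eq, LinearMap.range_eq_top] at hspan
  choose ω hω using fun j ↦ hspan (Pi.single j 1)
  exact ⟨ω, fun i j ↦ by simpa [Pi.single_apply] using congrFun (hω j) i⟩

lemma IsBase.isPosRoot (hα : IsBase H α) (i : Fin r) : IsPosRoot H α (α i) :=
  ⟨hα.isRoot i, Pi.single i 1, by simp [Pi.single_apply]⟩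

lemma IsPosRoot.exists_apply_eq_natCast {χ : Module.Dual ℂ H} (hχ : IsPosRoot H α χ) {t : H}
    (ht : ∀ j, ∃ n : ℕ, α j t = n) : ∃ n : ℕ, χ t = n := by
  obtain ⟨-, c, rfl⟩ := hχ
  choose n hn using ht
  exact ⟨∑ j, c j * n j, by simp [LinearMap.sum_apply, hn]⟩

lemma IsPosRoot.exists_apply_eq_natCast_add_one {χ : Module.Dual ℂ H} (hχ : IsPosRoot H α χ)
    {ρ : H} (hρ : ∀ j, α j ρ = 1) : ∃ n : ℕ, χ ρ = n + 1 := by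
  obtain ⟨hχ, c, rfl⟩ := hχ
  obtain ⟨j, hj⟩ : ∃ j, c j ≠ 0 := by
    by_contra! hc
    exact hχ.1 (by simp [hc])
  have hsum : ∑ j, c j ≠ 0 := fun h ↦ hj (by simpa using (Finset.sum_eq_zero_iff.mp h) j)
  obtain ⟨n, hn⟩ := Nat.exists_eq_succ_of_ne_zero hsum
  refine ⟨n, ?_⟩
  simp only [LinearMap.sum_apply, LinearMap.smul_apply, hρ, smul_eq_mul, mul_one]
  exact_mod_cast hn

variable [FiniteDimensional ℂ L] [LieAlgebra.IsKilling ℂ L]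

lemma IsBase.isPosRoot_or_isPosRoot_neg (hα : IsBase H α) {χ : Module.Dual ℂ H}
    (hχ : IsRoot H χ) :
    IsPosRoot H α χ ∨ IsPosRoot H α (-χ) := by
  refine (hα.pos_neg χ hχ).imp (⟨hχ, ·⟩) ?_
  rintro ⟨c, hc⟩
  exact ⟨hχ.neg, c, by rw [hc, neg_neg]⟩

lemma IsBase.isPosRoot_neg_of_apply (hα : IsBase H α) {χ : Module.Dual ℂ H} (hχ : IsRoot H χ)
    {t : H} (ht : ∀ j, ∃ n : ℕ, α j t = n) {n : ℕ} (hn : χ t = -(n + 1)) :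
    IsPosRoot H α (-χ) := by
  refine (hα.isPosRoot_or_isPosRoot_neg hχ).resolve_left fun hpos ↦ ?_
  obtain ⟨k, hk⟩ := hpos.exists_apply_eq_natCast ht
  exact (k + n).cast_add_one_ne_zero (R := ℂ) (by push_cast; linear_combination hn - hk)

lemma IsBase.not_isRoot_sub (hα : IsBase H α) {i j : Fin r} (hij : i ≠ j) :
    ¬ IsRoot H (α i - α j) := by
  intro hroot
  obtain ⟨ω, hω⟩ := hα.exists_fundamentalCoweights
  have hω_nat (k l) : ∃ n : ℕ, α k (ω l) = n := ⟨if k = l then 1 else 0, by simp [hω]⟩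
  have hpos : IsPosRoot H α (-(α i - α j)) := hα.isPosRoot_neg_of_apply hroot (hω_nat · j) (n := 0)
    (by simp [hω, hij])
  obtain ⟨k, hk⟩ := hpos.exists_apply_eq_natCast (hω_nat · i)
  exact k.cast_add_one_ne_zero (R := ℂ) (by rw [← hk]; simp [hω, hij.symm])

lemma IsBase.span_positiveRootVectors_union_oppositeBorelVectors (hα : IsBase H α) :
    Submodule.span ℂ (positiveRootVectors α ∪ oppositeBorelVectors α) = ⊤ := by
  refine eq_top_iff.mpr fun x _ ↦ ?_
  have hx : x ∈ ⨆ w : Weight ℂ H L, rootSpace H w := by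
    rw [iSup_genWeightSpace_eq_top' ℂ H L]; exact LieSubmodule.mem_top x
  refine LieSubmodule.iSup_induction (fun w : Weight ℂ H L ↦ rootSpace H w)
    (motive := (· ∈ Submodule.span ℂ (positiveRootVectors α ∪ oppositeBorelVectors α)))
    hx (fun w x hx ↦ Submodule.subset_span ?_) (zero_mem _) (fun _ _ ↦ add_mem)
  by_cases hw : w.IsZero
  · rw [hw, rootSpace_zero_eq] at hx
    exact .inr (.inl hx)
  · have hroot : IsRoot H (Weight.toLinear ℂ H L w) :=
      ⟨fun h ↦ hw (congrArg DFunLike.coe h), w.genWeightSpace_ne_bot⟩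
    rcases hα.isPosRoot_or_isPosRoot_neg hroot with hpos | hneg
    · exact .inl ⟨_, hpos, hx⟩
    · exact .inr (.inr ⟨_, hneg, by rwa [neg_neg]⟩)

end Base

section WeightVectors

variable {H : LieSubalgebra ℂ L} [H.IsCartanSubalgebra] {r : ℕ} {α : Fin r → Module.Dual ℂ H}
  {lam : Module.Dual ℂ H}
  {V : Type*} [AddCommGroup V] [Module ℂ V] [LieRingModule L V] [LieModule ℂ L V]

variable (α lam) in
/-- `v` is zero or a highest weight vector of weight `lam` with respect to the base `α`. -/
structure IsHighestWeightVector (v : V) : Prop where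
  lie_cartan : ∀ t : H, ⁅(t : L), v⁆ = lam t • v
  lie_pos : ∀ e ∈ positiveRootVectors α, ⁅e, v⁆ = 0

variable (α lam) in
/-- `v` is zero or a lowest weight vector of weight `lam` with respect to the base `α`. -/
structure IsLowestWeightVector (v : V) : Prop where
  lie_cartan : ∀ t : H, ⁅(t : L), v⁆ = lam t • v
  lie_neg : ∀ χ, IsPosRoot H α χ → ∀ f ∈ rootSpace H ⇑(-χ), ⁅f, v⁆ = 0

lemma IsHWIrrep.exists_isHighestWeightVector {V : Type} [AddCommGroup V] [Module ℂ V]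
    [LieRingModule L V] [LieModule ℂ L V] (hV : IsHWIrrep H α lam V) :
    ∃ v : V, v ≠ 0 ∧ IsHighestWeightVector α lam v := by
  obtain ⟨-, v, hv0, hvH, hv⟩ := hV
  exact ⟨v, hv0, hvH, fun e ⟨χ, hχ, he⟩ ↦ hv χ hχ e he⟩

lemma IsHighestWeightVector.lie_mem_span {v : V} (hv : IsHighestWeightVector α lam v) :
    ∀ e ∈ positiveRootVectors α, ∀ w ∈ Submodule.span ℂ {v}, ⁅e, w⁆ ∈ Submodule.span ℂ {v} := by
  intro e he w hw
  obtain ⟨c, rfl⟩ := Submodule.mem_span_singleton.mp hw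
  rw [lie_smul, hv.lie_pos e he, smul_zero]
  exact zero_mem _

lemma IsLowestWeightVector.lie_mem_ker {ξ : Module.Dual ℂ V} (hξ : IsLowestWeightVector α lam ξ) :
    ∀ b ∈ oppositeBorelVectors α, ∀ v ∈ LinearMap.ker ξ, ⁅b, v⁆ ∈ LinearMap.ker ξ := by
  intro b hb v hv
  have h_lie : ξ ⁅b, v⁆ = -(⁅b, ξ⁆ v) := by rw [Module.Dual.lie_apply, neg_neg]
  rw [LinearMap.mem_ker] at hv ⊢
  rcases hb with hb | ⟨χ, hχ, hb⟩
  · rw [h_lie, hξ.lie_cartan ⟨b, hb⟩, LinearMap.smul_apply, hv, smul_zero, neg_zero]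
  · rw [h_lie, hξ.lie_neg χ hχ b hb, LinearMap.zero_apply, neg_zero]

variable [FiniteDimensional ℂ L] [LieAlgebra.IsKilling ℂ L] [IsSimpleOrder (LieSubmodule ℂ L V)]

lemma IsLowestWeightVector.eq_zero_of_apply_eq_zero (hα : IsBase H α) {μ : Module.Dual ℂ H} {s : V}
    (hs : IsHighestWeightVector α μ s) (hs0 : s ≠ 0) {ξ : Module.Dual ℂ V}
    (hξ : IsLowestWeightVector α lam ξ) (hξs : ξ s = 0) : ξ = 0 := by
  refine LinearMap.ker_eq_top.mp ((eq_bot_or_eq_top_of_le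
    hα.span_positiveRootVectors_union_oppositeBorelVectors
    ((Submodule.span_singleton_le_iff_mem s _).mpr hξs) hs.lie_mem_span
    hξ.lie_mem_ker).resolve_left ?_)
  simpa using hs0

lemma IsLowestWeightVector.eq_zero_of_contractRight_eq_zero {M : Type*} [AddCommGroup M]
    [Module ℂ M] [LieRingModule L M] [LieModule ℂ L M] (hα : IsBase H α) {ξ : Module.Dual ℂ V}
    (hξ : IsLowestWeightVector α lam ξ) (hξ0 : ξ ≠ 0) {u : M ⊗[ℂ] V}
    (hu : ∀ e ∈ positiveRootVectors α, ⁅e, u⁆ = 0) (hξu : contractRight ℂ M V ξ u = 0) : u = 0 := by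
  let S := Submodule.span ℂ (Set.range fun θ : Module.Dual ℂ M ↦ contractLeft ℂ M V θ u)
  have hSξ : S ≤ LinearMap.ker ξ := by
    rw [Submodule.span_le]
    rintro _ ⟨θ, rfl⟩
    exact (apply_contractRight θ ξ u).symm.trans (by rw [hξu, map_zero])
  have hSP : ∀ e ∈ positiveRootVectors α, ∀ v ∈ S, ⁅e, v⁆ ∈ S := by
    intro e he
    change S ≤ S.comap (toEnd ℂ L V e)
    rw [Submodule.span_le]
    rintro _ ⟨θ, rfl⟩
    refine Submodule.subset_span ⟨⁅e, θ⁆, ?_⟩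
    simp only [toEnd_apply_apply, lie_contractLeft, hu e he, map_zero, add_zero]
  have hS : S = ⊥ := (eq_bot_or_eq_top_of_le
    hα.span_positiveRootVectors_union_oppositeBorelVectors hSξ hSP hξ.lie_mem_ker).resolve_right
      fun h ↦ hξ0 (LinearMap.ker_eq_top.mp h)
  refine eq_zero_of_contractLeft_eq_zero fun θ ↦ ?_
  rw [← Submodule.mem_bot ℂ, ← hS]
  exact Submodule.subset_span ⟨θ, rfl⟩

end WeightVectors

section LowestWeightFunctional

section Eigenspaces

variable {K 𝔤 V : Type*} [Field K] [LieRing 𝔤] [LieAlgebra K 𝔤] [AddCommGroup V] [Module K V]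
  [LieRingModule 𝔤 V] [LieModule K 𝔤 V] {h y : 𝔤} {a b : K} {v : V}

lemma lie_mem_eigenspace (hy : ⁅h, y⁆ = b • y) (hv : v ∈ (toEnd K 𝔤 V h).eigenspace a) :
    ⁅y, v⁆ ∈ (toEnd K 𝔤 V h).eigenspace (a + b) := by
  rw [Module.End.mem_eigenspace_iff, toEnd_apply_apply] at hv ⊢
  rw [leibniz_lie, hy, hv, smul_lie, lie_smul, add_smul, add_comm]

variable (V h a) in
/-- The sum of the eigenspaces of `h` on `V` with eigenvalues `a - 1, a - 2, …`. -/
def eigenspacesBelow : Submodule K V :=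
  ⨆ k : ℕ, (toEnd K 𝔤 V h).eigenspace (a - (k + 1))

lemma lie_mem_eigenspacesBelow_of_mem_eigenspace {n : ℕ} (hy : ⁅h, y⁆ = -((n : K) + 1) • y)
    (hv : v ∈ (toEnd K 𝔤 V h).eigenspace a) : ⁅y, v⁆ ∈ eigenspacesBelow V h a := by
  refine Submodule.mem_iSup_of_mem n ?_
  simpa only [sub_eq_add_neg] using lie_mem_eigenspace hy hv

lemma lie_mem_eigenspacesBelow {n : ℕ} (hy : ⁅h, y⁆ = -(n : K) • y)
    (hv : v ∈ eigenspacesBelow V h a) : ⁅y, v⁆ ∈ eigenspacesBelow V h a := by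
  change v ∈ (eigenspacesBelow V h a).comap (toEnd K 𝔤 V y)
  refine (iSup_le fun k ↦ ?_ : eigenspacesBelow V h a ≤ _) hv
  intro w hw
  have hsub : a - (k + 1) + -(n : K) = a - ((k + n : ℕ) + 1) := by push_cast; ring
  exact Submodule.mem_iSup_of_mem (k + n) (hsub ▸ lie_mem_eigenspace hy hw)

lemma notMem_eigenspacesBelow [CharZero K] (hv : v ∈ (toEnd K 𝔤 V h).eigenspace a) (hv0 : v ≠ 0) :
    v ∉ eigenspacesBelow V h a := by
  intro hv_below
  have hdisj := (toEnd K 𝔤 V h).eigenspaces_iSupIndep a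
  refine hv0 (Submodule.disjoint_def.mp hdisj v hv ((iSup_le fun k ↦ ?_ :
    eigenspacesBelow V h a ≤ _) hv_below))
  refine le_iSup₂_of_le (a - (k + 1)) ?_ le_rfl
  rw [Ne, sub_eq_self]
  exact k.cast_add_one_ne_zero

end Eigenspaces

variable {H : LieSubalgebra ℂ L} [H.IsCartanSubalgebra] {r : ℕ} {α : Fin r → Module.Dual ℂ H}
  {μ : Module.Dual ℂ H}
  {V : Type*} [AddCommGroup V] [Module ℂ V] [LieRingModule L V] [LieModule ℂ L V]

lemma IsHighestWeightVector.mem_eigenspace {s : V} (hs : IsHighestWeightVector α μ s) (t : H) :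
    s ∈ (toEnd ℂ L V (t : L)).eigenspace (μ t) :=
  Module.End.mem_eigenspace_iff.mpr (hs.lie_cartan t)

variable [FiniteDimensional ℂ L] [LieAlgebra.IsKilling ℂ L]

lemma lie_eq_zero_of_mem_cartan {x y : L} (hx : x ∈ H) (hy : y ∈ H) : ⁅x, y⁆ = 0 :=
  congrArg Subtype.val (trivial_lie_zero H H ⟨x, hx⟩ ⟨y, hy⟩)

lemma IsPosRoot.exists_lie_eq_smul_of_mem_rootSpace_neg {χ : Module.Dual ℂ H}
    (hχ : IsPosRoot H α χ) {ρ : H} (hρ : ∀ j, α j ρ = 1) {f : L} (hf : f ∈ rootSpace H ⇑(-χ)) :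
    ∃ n : ℕ, ⁅(ρ : L), f⁆ = -((n : ℂ) + 1) • f := by
  obtain ⟨n, hn⟩ := hχ.exists_apply_eq_natCast_add_one hρ
  exact ⟨n, by rw [lie_eq_smul_of_mem_rootSpace hf, LinearMap.neg_apply, hn]⟩

variable [IsSimpleOrder (LieSubmodule ℂ L V)]

lemma IsHighestWeightVector.span_sup_eigenspacesBelow_eq_top (hα : IsBase H α) {ρ : H}
    (hρ : ∀ j, α j ρ = 1) {s : V} (hs : IsHighestWeightVector α μ s) (hs0 : s ≠ 0) :
    Submodule.span ℂ {s} ⊔ eigenspacesBelow V (ρ : L) (μ ρ) = ⊤ := by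
  refine (eq_bot_or_eq_top_of_le hα.span_positiveRootVectors_union_oppositeBorelVectors
    le_sup_left hs.lie_mem_span fun b hb v hv ↦ ?_).resolve_left (by simpa using hs0)
  obtain ⟨w, hw, d, hd, rfl⟩ := Submodule.mem_sup.mp hv
  obtain ⟨c, rfl⟩ := Submodule.mem_span_singleton.mp hw
  rw [lie_add, lie_smul]
  rcases hb with hb | ⟨χ, hχ, hb⟩
  · have hρb : ⁅(ρ : L), b⁆ = -((0 : ℕ) : ℂ) • b := by
      rw [lie_eq_zero_of_mem_cartan ρ.2 hb, Nat.cast_zero, neg_zero, zero_smul]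
    rw [hs.lie_cartan ⟨b, hb⟩, smul_comm]
    exact add_mem (Submodule.mem_sup_left (Submodule.smul_mem _ _ hw))
      (Submodule.mem_sup_right (lie_mem_eigenspacesBelow hρb hd))
  · obtain ⟨n, hρb⟩ := hχ.exists_lie_eq_smul_of_mem_rootSpace_neg hρ hb
    refine Submodule.mem_sup_right (add_mem (Submodule.smul_mem _ _ ?_) ?_)
    · exact lie_mem_eigenspacesBelow_of_mem_eigenspace hρb (hs.mem_eigenspace ρ)
    · exact lie_mem_eigenspacesBelow (n := n + 1) (by exact_mod_cast hρb) hd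

lemma IsHighestWeightVector.exists_isLowestWeightVector_dual (hα : IsBase H α) {s : V}
    (hs : IsHighestWeightVector α μ s) (hs0 : s ≠ 0) :
    ∃ ξ : Module.Dual ℂ V, ξ ≠ 0 ∧ IsLowestWeightVector α (-μ) ξ := by
  obtain ⟨ω, hω⟩ := hα.exists_fundamentalCoweights
  let ρ := ∑ j, ω j
  have hρ (j) : α j ρ = 1 := by simp [ρ, hω]
  obtain ⟨ξ, hξs, hξ⟩ := Submodule.exists_le_ker_of_notMem
    (notMem_eigenspacesBelow (hs.mem_eigenspace ρ) hs0)
  have hξ_below {d} (hd : d ∈ eigenspacesBelow V (ρ : L) (μ ρ)) : ξ d = 0 := hξ hd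
  have hdecomp (v : V) : ∃ c : ℂ, ∃ d ∈ eigenspacesBelow V (ρ : L) (μ ρ), c • s + d = v := by
    have hv : v ∈ Submodule.span ℂ {s} ⊔ eigenspacesBelow V (ρ : L) (μ ρ) :=
      hs.span_sup_eigenspacesBelow_eq_top hα hρ hs0 ▸ Submodule.mem_top
    simpa [Submodule.mem_sup, Submodule.mem_span_singleton] using hv
  refine ⟨ξ, fun h ↦ hξs (by rw [h, LinearMap.zero_apply]), fun t ↦ ?_, fun χ hχ f hf ↦ ?_⟩ <;>
    refine LinearMap.ext fun v ↦ ?_ <;>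
    obtain ⟨c, d, hd, rfl⟩ := hdecomp v
  · have htd : ξ ⁅(t : L), d⁆ = 0 := hξ_below (lie_mem_eigenspacesBelow (n := 0)
      (by simp [lie_eq_zero_of_mem_cartan ρ.2 t.2]) hd)
    simp only [map_add, map_smul, Module.Dual.lie_apply, hs.lie_cartan t, htd, hξ_below hd,
      LinearMap.smul_apply, LinearMap.neg_apply, smul_eq_mul]
    ring
  · obtain ⟨n, hρf⟩ := hχ.exists_lie_eq_smul_of_mem_rootSpace_neg hρ hf
    have hfs := hξ_below (lie_mem_eigenspacesBelow_of_mem_eigenspace hρf (hs.mem_eigenspace ρ))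
    have hfd := hξ_below (lie_mem_eigenspacesBelow (n := n + 1) (by exact_mod_cast hρf) hd)
    simp [hfs, hfd]

end LowestWeightFunctional

section Nilpotency

variable {H : LieSubalgebra ℂ L} [H.IsCartanSubalgebra] {r : ℕ} {α : Fin r → Module.Dual ℂ H}
  {lam μ : Module.Dual ℂ H}
  {V : Type*} [AddCommGroup V] [Module ℂ V] [LieRingModule L V] [LieModule ℂ L V]

lemma IsLowestWeightVector.lie_toEnd_pow_succ_eq_zero (hα : IsBase H α) {v : V}
    (hv : IsLowestWeightVector α lam v) {i : Fin r} {t : H} {e f : L}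
    (hf : f ∈ rootSpace H ⇑(-α i)) (T : IsSl2Triple (t : L) e f) {m : ℕ} (hm : lam t = -m) :
    ⁅f, (toEnd ℂ L V e ^ (m + 1)) v⁆ = 0 := by
  rcases eq_or_ne v 0 with rfl | hv0
  · simp
  have P : T.symm.HasPrimitiveVectorWith v (m : ℂ) :=
    ⟨hv0, by rw [neg_lie, hv.lie_cartan, hm, neg_smul, neg_neg], hv.lie_neg _ (hα.isPosRoot i) f hf⟩
  rw [P.lie_e_pow_succ_toEnd_f, sub_self, mul_zero, zero_smul]

variable [FiniteDimensional ℂ L] [LieAlgebra.IsKilling ℂ L]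

lemma lie_toEnd_pow_eq_smul {χ : Module.Dual ℂ H} {e : L} (he : e ∈ rootSpace H ⇑χ) {v : V}
    (hv : ∀ t : H, ⁅(t : L), v⁆ = lam t • v) (k : ℕ) (t : H) :
    ⁅(t : L), (toEnd ℂ L V e ^ k) v⁆ = (lam + k • χ) t • (toEnd ℂ L V e ^ k) v := by
  induction k with
  | zero => simp [hv]
  | succ k ih =>
    rw [pow_succ', Module.End.mul_apply, toEnd_apply_apply, leibniz_lie, ih,
      lie_eq_smul_of_mem_rootSpace he, smul_lie, lie_smul, ← add_smul]
    congr 1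
    simp only [LinearMap.add_apply, LinearMap.smul_apply, succ_nsmul]
    ring

/-- Roots with a negative coefficient outside `α i` keep it when multiples of `α i` are added. -/
lemma IsLowestWeightVector.lie_toEnd_pow_eq_zero_of_apply (hα : IsBase H α) {v : V}
    (hv : IsLowestWeightVector α lam v) {i : Fin r} {e : L} (he : e ∈ rootSpace H ⇑(α i)) {t : H}
    (ht : ∀ j, ∃ n : ℕ, α j t = n) (hit : α i t = 0) (k : ℕ) {χ : Module.Dual ℂ H} {n : ℕ}
    (hχ : χ t = -(n + 1)) {y : L} (hy : y ∈ rootSpace H ⇑χ) :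
    ⁅y, (toEnd ℂ L V e ^ k) v⁆ = 0 := by
  induction k generalizing χ y with
  | zero =>
    rcases eq_or_ne y 0 with rfl | hy0
    · exact zero_lie _
    · have hχ0 : χ ≠ 0 := by
        rintro rfl
        exact neg_ne_zero.mpr n.cast_add_one_ne_zero hχ.symm
      have hpos := hα.isPosRoot_neg_of_apply (isRoot_of_mem_rootSpace hχ0 hy hy0) ht hχ
      exact hv.lie_neg _ hpos y (by rwa [neg_neg])
  | succ k ih =>
    rw [pow_succ', Module.End.mul_apply, toEnd_apply_apply, leibniz_lie, ih hχ hy, lie_zero,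
      add_zero]
    refine ih (χ := χ + α i) ?_ (lie_mem_rootSpace_add hy he)
    rw [LinearMap.add_apply, hit, add_zero, hχ]

lemma IsPosRoot.eq_simple_or_exists_apply_ne_zero (hα : IsBase H α) {ω : Fin r → H}
    (hω : ∀ i j, α i (ω j) = if i = j then 1 else 0) {χ : Module.Dual ℂ H} (hχ : IsPosRoot H α χ)
    (i : Fin r) : χ = α i ∨ ∃ j ≠ i, ∃ n : ℕ, χ (ω j) = n + 1 := by
  obtain ⟨hχ, c, rfl⟩ := hχ
  by_cases hc : ∃ j ≠ i, c j ≠ 0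
  · obtain ⟨j, hji, hj⟩ := hc
    obtain ⟨n, hn⟩ := Nat.exists_eq_succ_of_ne_zero hj
    exact .inr ⟨j, hji, n, by simp [LinearMap.sum_apply, hω, hn]⟩
  · push Not at hc
    have hsum : ∑ j, (c j : ℂ) • α j = (c i : ℂ) • α i :=
      Finset.sum_eq_single i (fun j _ hji ↦ by simp [hc j hji]) (by simp)
    rw [hsum] at hχ ⊢
    refine .inl (((hα.isRoot i).smul_eq_neg_or_eq hχ).resolve_left fun h ↦ ?_)
    have hci : (c i : ℂ) = -1 := by simpa [hω] using DFunLike.congr_fun h (ω i)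
    exact (c i).cast_add_one_ne_zero (R := ℂ) (by rw [hci]; ring)

lemma IsLowestWeightVector.toEnd_pow_succ (hα : IsBase H α) {v : V}
    (hv : IsLowestWeightVector α lam v) {i : Fin r} {t : H} {e f : L}
    (he : e ∈ rootSpace H ⇑(α i)) (hf : f ∈ rootSpace H ⇑(-α i)) (T : IsSl2Triple (t : L) e f)
    {m : ℕ} (hm : lam t = -m) :
    IsLowestWeightVector α (lam + (m + 1) • α i) ((toEnd ℂ L V e ^ (m + 1)) v) := by
  refine ⟨lie_toEnd_pow_eq_smul he hv.lie_cartan (m + 1), fun χ hχ y hy ↦ ?_⟩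
  obtain ⟨ω, hω⟩ := hα.exists_fundamentalCoweights
  rcases hχ.eq_simple_or_exists_apply_ne_zero hα hω i with rfl | ⟨j, hji, n, hn⟩
  · obtain ⟨c, rfl⟩ :=
      exists_smul_eq_of_mem_rootSpace (neg_ne_zero.mpr (hα.isRoot i).1) hf T.f_ne_zero hy
    rw [smul_lie, hv.lie_toEnd_pow_succ_eq_zero hα hf T hm, smul_zero]
  · have hωj (k) : ∃ n : ℕ, α k (ω j) = n := ⟨if k = j then 1 else 0, by simp [hω]⟩
    have hij : α i (ω j) = 0 := by rw [hω, if_neg hji.symm]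
    exact hv.lie_toEnd_pow_eq_zero_of_apply hα he hωj hij (m + 1)
      (by rw [LinearMap.neg_apply, hn]) hy

lemma IsLowestWeightVector.toEnd_pow_succ_dual_eq_zero [IsSimpleOrder (LieSubmodule ℂ L V)]
    (hα : IsBase H α) {s : V} (hs : IsHighestWeightVector α μ s) (hs0 : s ≠ 0)
    {ξ : Module.Dual ℂ V} (hξ : IsLowestWeightVector α lam ξ) {i : Fin r} {t : H} {e f : L}
    (he : e ∈ rootSpace H ⇑(α i)) (hf : f ∈ rootSpace H ⇑(-α i)) (T : IsSl2Triple (t : L) e f)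
    {m : ℕ} (hm : lam t = -m) :
    (toEnd ℂ L (Module.Dual ℂ V) e ^ (m + 1)) ξ = 0 := by
  refine (hξ.toEnd_pow_succ hα he hf T hm).eq_zero_of_apply_eq_zero hα hs hs0 ?_
  rw [pow_succ', Module.End.mul_apply, toEnd_apply_apply, Module.Dual.lie_apply,
    hs.lie_pos e ⟨_, hα.isPosRoot i, he⟩, map_zero, neg_zero]

end Nilpotency

section Strings

variable {H : LieSubalgebra ℂ L} [H.IsCartanSubalgebra] {r : ℕ} {α : Fin r → Module.Dual ℂ H}
  {i j : Fin r} {t : H} {e f : L} {n k l : ℕ}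

lemma IsBase.smul_add_ne_zero (hα : IsBase H α) (hij : i ≠ j) (c : ℂ) : c • α i + α j ≠ 0 := by
  obtain ⟨ω, hω⟩ := hα.exists_fundamentalCoweights
  intro h
  simpa [hω, hij] using DFunLike.congr_fun h (ω j)

variable [FiniteDimensional ℂ L] [LieAlgebra.IsKilling ℂ L]

lemma IsBase.lie_eq_zero_of_mem_rootSpace_neg (hα : IsBase H α) (hij : i ≠ j) {x y : L}
    (hx : x ∈ rootSpace H ⇑(α i)) (hy : y ∈ rootSpace H ⇑(-α j)) : ⁅x, y⁆ = 0 := by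
  have hxy := lie_mem_rootSpace_add hx hy
  rw [← sub_eq_add_neg] at hxy
  by_contra hxy0
  exact hα.not_isRoot_sub hij (isRoot_of_mem_rootSpace
    (sub_ne_zero.mpr (hα.indep.injective.ne hij)) hxy hxy0)

lemma IsBase.toEnd_pow_ne_zero (hα : IsBase H α) (hij : i ≠ j) (he : e ∈ rootSpace H ⇑(α i))
    (hf : f ∈ rootSpace H ⇑(-α i)) (T : IsSl2Triple (t : L) e f) (hn : α j t = -n)
    (hkl : k + l ≤ n) {x : L} (hx : x ∈ rootSpace H ⇑(k • α i + α j)) (hx0 : x ≠ 0) :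
    (toEnd ℂ L L e ^ l) x ≠ 0 := by
  obtain ⟨z, hz, hz0⟩ := (hα.isRoot j).exists_mem_rootSpace_ne_zero
  have P : T.symm.HasPrimitiveVectorWith z (n : ℂ) := by
    refine ⟨hz0, ?_, ?_⟩
    · rw [neg_lie, lie_eq_smul_of_mem_rootSpace hz, hn, neg_smul, neg_neg]
    · rw [← lie_skew, hα.lie_eq_zero_of_mem_rootSpace_neg hij.symm hz hf, neg_zero]
  have hβ0 : k • α i + α j ≠ 0 := by
    rw [← Nat.cast_smul_eq_nsmul ℂ]
    exact hα.smul_add_ne_zero hij k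
  obtain ⟨c, hc⟩ := exists_smul_eq_of_mem_rootSpace hβ0 hx hx0 (toEnd_pow_mem_rootSpace he hz k)
  intro hlx
  refine P.pow_toEnd_f_ne_zero_of_eq_nat rfl hkl ?_
  rw [add_comm k l, pow_add, Module.End.mul_apply, ← hc, map_smul, hlx, smul_zero]

lemma IsBase.toEnd_pow_ne_zero_of_mem_rootSpace_neg (hα : IsBase H α) (hij : i ≠ j)
    (he : e ∈ rootSpace H ⇑(α i)) (hf : f ∈ rootSpace H ⇑(-α i)) (T : IsSl2Triple (t : L) e f)
    (hn : α j t = -n) (hk : k ≤ n) (hl : l ≤ k) {x : L}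
    (hx : x ∈ rootSpace H ⇑(-(k • α i + α j))) (hx0 : x ≠ 0) :
    (toEnd ℂ L L e ^ l) x ≠ 0 := by
  obtain ⟨y, hy, hy0⟩ := (hα.isRoot j).neg.exists_mem_rootSpace_ne_zero
  have P : T.HasPrimitiveVectorWith y (n : ℂ) := by
    refine ⟨hy0, ?_, hα.lie_eq_zero_of_mem_rootSpace_neg hij he hy⟩
    rw [lie_eq_smul_of_mem_rootSpace hy, LinearMap.neg_apply, hn, neg_neg]
  have hβ0 : -(k • α i + α j) ≠ 0 := by
    rw [← Nat.cast_smul_eq_nsmul ℂ]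
    exact neg_ne_zero.mpr (hα.smul_add_ne_zero hij k)
  have hfy := toEnd_pow_mem_rootSpace hf hy k
  rw [smul_neg, ← neg_add] at hfy
  obtain ⟨c, hc⟩ := exists_smul_eq_of_mem_rootSpace hβ0 hx hx0 hfy
  intro hlx
  refine toEnd_e_pow_toEnd_f_pow_ne_zero P hk hl ?_
  rw [← hc, map_smul, hlx, smul_zero]

end Strings

section Invariants

variable {H : LieSubalgebra ℂ L} [H.IsCartanSubalgebra] {r : ℕ} {α : Fin r → Module.Dual ℂ H}

lemma IsHighestWeightVector.exists_of_tensorProduct [FiniteDimensional ℂ L]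
    [LieAlgebra.IsKilling ℂ L] {M V : Type*} [AddCommGroup M] [Module ℂ M] [LieRingModule L M]
    [LieModule ℂ L M] [AddCommGroup V] [Module ℂ V] [LieRingModule L V] [LieModule ℂ L V]
    [IsSimpleOrder (LieSubmodule ℂ L V)] (hα : IsBase H α) {lam μ : Module.Dual ℂ H}
    {u : M ⊗[ℂ] V} (hu : IsHighestWeightVector α lam u) (hu0 : u ≠ 0)
    {s : V} (hs : IsHighestWeightVector α μ s) (hs0 : s ≠ 0)
    {i : Fin r} {t : H} {e f : L} (he : e ∈ rootSpace H ⇑(α i))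
    (hf : f ∈ rootSpace H ⇑(-α i)) (T : IsSl2Triple (t : L) e f) {m : ℕ} (hm : μ t = m) :
    ∃ x : M, x ≠ 0 ∧ (∀ h : H, ⁅(h : L), x⁆ = (lam - μ) h • x) ∧
      (toEnd ℂ L M e ^ (m + 1)) x = 0 := by
  obtain ⟨ξ, hξ0, hξ⟩ := hs.exists_isLowestWeightVector_dual hα hs0
  refine ⟨contractRight ℂ M V ξ u, ?_, fun h ↦ ?_, ?_⟩
  · exact fun h ↦ hu0 (hξ.eq_zero_of_contractRight_eq_zero hα hξ0 hu.lie_pos h)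
  · rw [lie_contractRight, hξ.lie_cartan, hu.lie_cartan, map_smul, map_smul, LinearMap.smul_apply,
      ← add_smul, LinearMap.neg_apply, LinearMap.sub_apply, neg_add_eq_sub]
  · have hξe := hξ.toEnd_pow_succ_dual_eq_zero hα hs hs0 he hf T
      (show (-μ) t = -(m : ℂ) by rw [LinearMap.neg_apply, hm])
    rw [toEnd_pow_contractRight (hu.lie_pos e ⟨_, hα.isPosRoot i, he⟩), hξe, map_zero,
      LinearMap.zero_apply]

lemma maxTrivSubmodule_tensorProduct_eq_bot {M : Type*} [AddCommGroup M] [Module ℂ M]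
    [LieRingModule L M] [LieModule ℂ L M]
    {V W : Type} [AddCommGroup V] [Module ℂ V] [LieRingModule L V] [LieModule ℂ L V]
    [AddCommGroup W] [Module ℂ W] [LieRingModule L W] [LieModule ℂ L W]
    {lam : Module.Dual ℂ H} (hW : IsHWIrrep H α lam W) (hWV : IsDualPair (L := L) W V)
    (hM : ∀ u : M, IsHighestWeightVector α lam u → u = 0) :
    maxTrivSubmodule ℂ L (M ⊗[ℂ] V) = ⊥ := by
  obtain ⟨B, -, hBV, hB⟩ := hWV
  refine (LieSubmodule.eq_bot_iff _).mpr fun t ht ↦ ?_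
  rw [mem_maxTrivSubmodule] at ht
  let φ : W →ₗ⁅ℂ, L⁆ M :=
    { (contractRight ℂ M V).flip t ∘ₗ B with
      map_lie' := fun {x w} ↦ by
        have hBx : B ⁅x, w⁆ = ⁅x, B w⁆ := LinearMap.ext fun v ↦ by
          rw [Module.Dual.lie_apply]
          exact eq_neg_of_add_eq_zero_left (hB x w v)
        change contractRight ℂ M V (B ⁅x, w⁆) t = ⁅x, contractRight ℂ M V (B w) t⁆
        rw [lie_contractRight, ht, map_zero, add_zero, hBx] }
  obtain ⟨w, hw0, hw⟩ := hW.exists_isHighestWeightVector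
  have hφw : φ w = 0 := hM _
    ⟨fun h ↦ by rw [← LieModuleHom.map_lie, hw.lie_cartan, map_smul],
      fun e he ↦ by rw [← LieModuleHom.map_lie, hw.lie_pos e he, map_zero]⟩
  have hker : φ.ker = ⊤ := (hW.1.eq_bot_or_eq_top φ.ker).resolve_left fun h ↦
    hw0 ((LieSubmodule.eq_bot_iff _).mp h w hφw)
  refine eq_zero_of_contractRight_eq_zero (Ξ := Set.range B)
    (fun v hv ↦ hBV v fun w ↦ hv _ ⟨w, rfl⟩) ?_
  rintro _ ⟨w, rfl⟩
  exact (hker ▸ LieSubmodule.mem_top w : w ∈ φ.ker)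

end Invariants

theorem statement6_general
    {L : Type} [LieRing L] [LieAlgebra ℂ L] [FiniteDimensional ℂ L] [LieAlgebra.IsKilling ℂ L]
    (H : LieSubalgebra ℂ L) [H.IsCartanSubalgebra]
    {r : ℕ} {α : Fin r → Module.Dual ℂ H} (hα : IsBase H α)
    {i j : Fin r} (hij : i ≠ j) {t : H} (ht : IsCoroot H (α i) t)
    {n m k : ℕ} (hn : α j t = -n) {μ νbar : Module.Dual ℂ H} (hm : μ t = m)
    {Vμ Vν Wν : Type} [AddCommGroup Vμ] [Module ℂ Vμ] [LieRingModule L Vμ] [LieModule ℂ L Vμ]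
    [AddCommGroup Vν] [Module ℂ Vν] [LieRingModule L Vν] [LieModule ℂ L Vν]
    [AddCommGroup Wν] [Module ℂ Wν] [LieRingModule L Wν] [LieModule ℂ L Wν]
    (hVμ : IsHWIrrep H α μ Vμ) (hWν : IsHWIrrep H α νbar Wν) (hdual : IsDualPair (L := L) Wν Vν)
    (hcase : (νbar - μ = k • α i + α j ∧ m + k < n) ∨
      (νbar - μ = -(k • α i + α j) ∧ m < k ∧ k ≤ n)) :
    maxTrivSubmodule ℂ L (L ⊗[ℂ] (Vμ ⊗[ℂ] Vν)) = ⊥ := by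
  have := hVμ.1
  obtain ⟨s, hs0, hs⟩ := hVμ.exists_isHighestWeightVector
  obtain ⟨e, he, f, hf, T⟩ := ht.exists_isSl2Triple
  have h_no_hw (u : L ⊗[ℂ] Vμ) (hu : IsHighestWeightVector α νbar u) : u = 0 := by
    by_contra hu0
    obtain ⟨x, hx0, hxH, hex⟩ := hu.exists_of_tensorProduct hα hu0 hs hs0 he hf T hm
    have hx := mem_rootSpace_of_forall_lie_eq_smul hxH
    rcases hcase with ⟨hβ, hmk⟩ | ⟨hβ, hmk, hkn⟩ <;> rw [hβ] at hx
    · exact hα.toEnd_pow_ne_zero hij he hf T hn (by omega) hx hx0 hex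
    · exact hα.toEnd_pow_ne_zero_of_mem_rootSpace_neg hij he hf T hn hkn hmk hx hx0 hex
  have h_bot := maxTrivSubmodule_tensorProduct_eq_bot hWν hdual h_no_hw
  refine (LieSubmodule.eq_bot_iff _).mpr fun u hu ↦ ?_
  refine (TensorProduct.assoc ℂ L Vμ Vν).symm.map_eq_zero_iff.mp
    ((LieSubmodule.eq_bot_iff _).mp h_bot _ fun x ↦ ?_)
  rw [lie_assoc_symm, hu x, map_zero]

/-- Cancellation cases for `G₂`.  Here `L` is a finite-dimensional simple
complex Lie algebra whose root system has a base of two simple roots `α 0` (short) and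
`α 1` (long) with Cartan pairings `⟨α 1, (α 0)∨⟩ = -3` and `⟨α 0, (α 1)∨⟩ = -1`, i.e. `L`
is of type `G₂`.  If `β := ν̄ - μ` is a root and either (a) `⟨μ, α₁∨⟩ = 0` and
`β = -(α₁ + α₂)` or `β = 2α₁ + α₂`, or (b) `⟨μ, α₁∨⟩ = 1` and `β = α₁ + α₂` or
`β = -(2α₁ + α₂)`, then the `𝔤`-invariant subspace of `adj(𝔤) ⊗ V_μ ⊗ V_ν` is zero. -/
theorem statement6
    {L : Type} [LieRing L] [LieAlgebra ℂ L] [FiniteDimensional ℂ L]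
    [LieAlgebra.IsSimple ℂ L]
    (H : LieSubalgebra ℂ L) [H.IsCartanSubalgebra]
    (α : Fin 2 → Module.Dual ℂ H) (hc : Fin 2 → H)
    (hbase : IsBase H α) (hcoroot : ∀ j, IsCoroot H (α j) (hc j))
    (hG2short : α 1 (hc 0) = -3) (hG2long : α 0 (hc 1) = -1)
    (μ ν νbar : Module.Dual ℂ H) (hμ : IsDomInt hc μ) (hν : IsDomInt hc ν)
    (Vμ : Type) [AddCommGroup Vμ] [Module ℂ Vμ] [LieRingModule L Vμ]
    [LieModule ℂ L Vμ] [FiniteDimensional ℂ Vμ]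
    (Vν : Type) [AddCommGroup Vν] [Module ℂ Vν] [LieRingModule L Vν]
    [LieModule ℂ L Vν] [FiniteDimensional ℂ Vν]
    (Wν : Type) [AddCommGroup Wν] [Module ℂ Wν] [LieRingModule L Wν]
    [LieModule ℂ L Wν] [FiniteDimensional ℂ Wν]
    (hVμ : IsHWIrrep H α μ Vμ) (hVν : IsHWIrrep H α ν Vν) (hWν : IsHWIrrep H α νbar Wν)
    (hdual : IsDualPair (L := L) Wν Vν)
    (hroot : IsRoot H (νbar - μ))
    (hcase :
      (μ (hc 0) = 0 ∧ (νbar - μ = -(α 0 + α 1) ∨ νbar - μ = (2 : ℂ) • α 0 + α 1)) ∨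
      (μ (hc 0) = 1 ∧ (νbar - μ = α 0 + α 1 ∨ νbar - μ = -((2 : ℂ) • α 0 + α 1)))) :
    maxTrivSubmodule ℂ L (L ⊗[ℂ] (Vμ ⊗[ℂ] Vν)) = ⊥ := by
  have general {m k : ℕ} (hm : μ (hc 0) = m) :=
    statement6_general (n := 3) (k := k) H hbase zero_ne_one (hcoroot 0) (by simpa using hG2short)
      hm hVμ hWν hdual
  rcases hcase with ⟨hm, hβ | hβ⟩ | ⟨hm, hβ | hβ⟩
  · exact general (m := 0) (k := 1) (by simpa using hm) (.inr ⟨by simpa using hβ, by simp, by simp⟩)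
  · exact general (m := 0) (k := 2) (by simpa using hm)
      (.inl ⟨by rw [hβ, two_smul, two_nsmul], by simp⟩)
  · exact general (m := 1) (k := 1) (by simpa using hm) (.inl ⟨by simpa using hβ, by simp⟩)
  · exact general (m := 1) (k := 2) (by simpa using hm)
      (.inr ⟨by rw [hβ, two_smul, two_nsmul], by simp, by simp⟩)

end AdjPaper
end

section
/- Let μ be a dominant integral weight of 𝔤 with μ ≠ μ̄ (i.e. V_μ is not self-dual). Then the 𝔤-invariant subspaces of adj(𝔤) ⊗ S²V_μ and of adj(𝔤) ⊗ Λ²V_μ are both zero. -/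
/-!
Write `𝔤` for the Lie algebra. An invariant of `𝔤 ⊗ V ⊗ V` is the same thing as an equivariant
bilinear map `β : V* × V* → 𝔤`. If `β ≠ 0`, then `β(w, c) ≠ 0` for a highest weight vector `w` and a
lowest weight vector `c` of `V*`. The weights of `w` and `c` are `μ̄` and `-μ`, so `β(w, c)` has
weight `μ̄ - μ`.

Let `R ∈ H` be the element on which every simple root takes the value `1`. As `2R` is the semisimple
element of a principal `𝔰𝔩₂`, the eigenvalues of `R` on `V*` are symmetric about `0`. The extreme
ones are `μ̄(R)` and `-μ(R)`, hence `β(w, c)` has `R`-degree `0`, i.e. it lies in `H`. But `H` is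
abelian, so the weight `μ̄ - μ` vanishes, and `V ≅ V*`.
-/

open scoped TensorProduct Classical
open LieAlgebra LieModule Module

namespace AdjPaper

variable {L : Type} [LieRing L] [LieAlgebra ℂ L]

section Eigenspaces

variable {K E : Type*} [Field K] [AddCommGroup E] [Module K E] (f : End K E)

theorem disjoint_eigenspace_iSup {ι : Type*} {a : K} {b : ι → K} (h : ∀ i, b i ≠ a) :
    Disjoint (f.eigenspace a) (⨆ i, f.eigenspace (b i)) :=
  (f.eigenspaces_iSupIndep a).mono_right <|
    iSup_le fun i => le_iSup₂_of_le (b i) (h i) le_rfl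

theorem eigenspace_le_of_iSup_eq_top {ι : Type*} {a : K} {b : ι → K} {S : ι → Submodule K E}
    (hS : ∀ i, S i ≤ f.eigenspace (b i)) (htop : ⨆ i, S i = ⊤) :
    f.eigenspace a ≤ ⨆ (i) (_ : b i = a), S i := by
  set A := ⨆ (i) (_ : b i = a), S i
  set B := ⨆ i : {i // b i ≠ a}, f.eigenspace (b i)
  have hA : A ≤ f.eigenspace a := iSup₂_le fun i hi => hi ▸ hS i
  have hAB : A ⊔ B = ⊤ := by
    refine top_le_iff.mp (htop ▸ iSup_le fun i => ?_)
    by_cases hi : b i = a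
    · exact le_sup_of_le_left (le_iSup₂_of_le i hi le_rfl)
    · exact le_sup_of_le_right ((hS i).trans (le_iSup_of_le ⟨i, hi⟩ le_rfl))
  have hB : Disjoint (f.eigenspace a) B := disjoint_eigenspace_iSup f fun i => i.2
  calc f.eigenspace a = (A ⊔ B) ⊓ f.eigenspace a := by rw [hAB, top_inf_eq]
    _ = A ⊔ B ⊓ f.eigenspace a := sup_inf_assoc_of_le B hA
    _ ≤ A := by rw [inf_comm, hB.eq_bot, sup_bot_eq]

theorem exists_hasEigenvalue_forall_not_hasEigenvalue_add [IsAlgClosed K] [CharZero K]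
    [FiniteDimensional K E] [Nontrivial E] :
    ∃ a, f.HasEigenvalue a ∧ ∀ n : ℕ, 0 < n → ¬ f.HasEigenvalue (a + n) := by
  obtain ⟨a, ha⟩ := f.exists_eigenvalue
  have hinj : Function.Injective fun n : ℕ => a + (n : K) :=
    (add_right_injective a).comp Nat.cast_injective
  have hfin : {n : ℕ | f.HasEigenvalue (a + n)}.Finite :=
    f.finite_hasEigenvalue.preimage hinj.injOn
  obtain ⟨m, hm, hmax⟩ := hfin.exists_maximal ⟨0, by simpa using ha⟩
  refine ⟨a + m, hm, fun n hn h => ?_⟩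
  have : m + n ≤ m := hmax (by simpa [add_assoc] using h) (Nat.le_add_right m n)
  lia

end Eigenspaces

section DegreeSpace

variable {K 𝔤 M : Type*} [Field K] [LieRing 𝔤] [LieAlgebra K 𝔤]
  [AddCommGroup M] [Module K M] [LieRingModule 𝔤 M] [LieModule K 𝔤 M]

variable (M) in
/-- The subspace of `M` of degree `c` for the grading defined by `R`, i.e. the `c`-eigenspace
of `R`. -/
def degreeSpace (R : 𝔤) (c : K) : Submodule K M :=
  (toEnd K 𝔤 M R).eigenspace c

theorem mem_degreeSpace {R : 𝔤} {c : K} {m : M} : m ∈ degreeSpace M R c ↔ ⁅R, m⁆ = c • m :=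
  Module.End.mem_eigenspace_iff

theorem degreeSpace_neg (R : 𝔤) (c : K) : degreeSpace M (-R) c = degreeSpace M R (-c) := by
  ext m
  rw [mem_degreeSpace, mem_degreeSpace, neg_lie, neg_smul, neg_eq_iff_eq_neg]

theorem lie_mem_degreeSpace {R x : 𝔤} {a b : K} {m : M} (hx : x ∈ degreeSpace 𝔤 R a)
    (hm : m ∈ degreeSpace M R b) : ⁅x, m⁆ ∈ degreeSpace M R (a + b) := by
  rw [mem_degreeSpace] at *
  rw [leibniz_lie, hx, hm, smul_lie, lie_smul, add_smul]

end DegreeSpace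

section Grading

variable {K 𝔤 : Type*} [Field K] [LieRing 𝔤] [LieAlgebra K 𝔤]

/-- `R` makes `𝔤` a `ℤ`-graded Lie algebra whose part of degree zero is `H`. The parts of
negative and positive degree play the role of the two nilpotent subalgebras of a triangular
decomposition. -/
structure IsTriangularGrading (H : LieSubalgebra K 𝔤) (R : H) : Prop where
  iSup_eq_top : ⨆ n : ℤ, degreeSpace 𝔤 (R : 𝔤) (n : K) = ⊤
  degreeSpace_zero : degreeSpace 𝔤 (R : 𝔤) (0 : K) = H.toSubmodule

/-- A triangular grading such that `2R` is the semisimple element of an `𝔰𝔩₂`-triple with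
nilpotent elements of degrees `1` and `-1`. The zero triple is allowed. -/
structure IsPrincipalGrading (H : LieSubalgebra K 𝔤) (R : H) : Prop
    extends IsTriangularGrading H R where
  exists_sl2 : ∃ e ∈ degreeSpace 𝔤 (R : 𝔤) (1 : K), ∃ f ∈ degreeSpace 𝔤 (R : 𝔤) (-1 : K),
    ⁅e, f⁆ = (2 : K) • (R : 𝔤)

variable {H : LieSubalgebra K 𝔤} {R : H}

theorem IsTriangularGrading.neg (hR : IsTriangularGrading H R) : IsTriangularGrading H (-R) where
  iSup_eq_top := by
    rw [← hR.iSup_eq_top, ← (Equiv.neg ℤ).iSup_comp]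
    simp only [Equiv.neg_apply, Int.cast_neg, NegMemClass.coe_neg, degreeSpace_neg, neg_neg]
  degreeSpace_zero := by
    rw [NegMemClass.coe_neg, degreeSpace_neg, neg_zero, hR.degreeSpace_zero]

theorem IsPrincipalGrading.neg (hR : IsPrincipalGrading H R) : IsPrincipalGrading H (-R) where
  toIsTriangularGrading := hR.toIsTriangularGrading.neg
  exists_sl2 := by
    obtain ⟨e, he, f, hf, hef⟩ := hR.exists_sl2
    refine ⟨f, ?_, e, ?_, ?_⟩
    · rwa [NegMemClass.coe_neg, degreeSpace_neg]
    · rwa [NegMemClass.coe_neg, degreeSpace_neg, neg_neg]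
    · rw [← lie_skew, hef, NegMemClass.coe_neg, smul_neg]

end Grading

section LowerSpan

variable {K 𝔤 M : Type*} [Field K] [LieRing 𝔤] [LieAlgebra K 𝔤]
  [AddCommGroup M] [Module K M] [LieRingModule 𝔤 M]

variable (K) in
/-- The span of the vectors obtained from `w` by repeatedly applying homogeneous elements of
negative degree. -/
def lowerSpan (R : 𝔤) (w : M) : Submodule K M :=
  sInf {S | w ∈ S ∧ ∀ n < (0 : ℤ), ∀ x ∈ degreeSpace 𝔤 R (n : K), ∀ s ∈ S, ⁅x, s⁆ ∈ S}

theorem mem_lowerSpan_self (R : 𝔤) (w : M) : w ∈ lowerSpan K R w := by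
  simp only [lowerSpan, Submodule.mem_sInf]
  exact fun S hS => hS.1

theorem lowerSpan_le {R : 𝔤} {w : M} {S : Submodule K M} (hw : w ∈ S)
    (hS : ∀ n < (0 : ℤ), ∀ x ∈ degreeSpace 𝔤 R (n : K), ∀ s ∈ S, ⁅x, s⁆ ∈ S) :
    lowerSpan K R w ≤ S :=
  sInf_le ⟨hw, hS⟩

theorem lie_mem_lowerSpan_of_neg {R : 𝔤} {w : M} {n : ℤ} (hn : n < 0) {x : 𝔤}
    (hx : x ∈ degreeSpace 𝔤 R (n : K)) {s : M} (hs : s ∈ lowerSpan K R w) :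
    ⁅x, s⁆ ∈ lowerSpan K R w := by
  simp only [lowerSpan, Submodule.mem_sInf] at hs ⊢
  exact fun S hS => hS.2 n hn x hx s (hs S hS)

/-- `w` is a vector of weight `μ` killed by every homogeneous element of positive degree.
Lowest weight vectors are the highest weight vectors for `-R`. -/
structure IsHighestWeightVector_s7 (H : LieSubalgebra K 𝔤) (R : H) (μ : Dual K H) (w : M) :
    Prop where
  ne_zero : w ≠ 0
  lie_eq_smul (h : H) : ⁅(h : 𝔤), w⁆ = μ h • w
  lie_eq_zero {n : ℤ} (hn : 0 < n) {x : 𝔤} (hx : x ∈ degreeSpace 𝔤 (R : 𝔤) (n : K)) : ⁅x, w⁆ = 0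

end LowerSpan

section HighestWeight

variable {K 𝔤 M : Type*} [Field K] [LieRing 𝔤] [LieAlgebra K 𝔤]
  [AddCommGroup M] [Module K M] [LieRingModule 𝔤 M]
  {H : LieSubalgebra K 𝔤} {R : H}

namespace IsHighestWeightVector_s7

variable {μ : Dual K H} {w : M}

theorem lie_self_mem_lowerSpan (hw : IsHighestWeightVector_s7 H R μ w)
    (hR : IsTriangularGrading H R) (x : 𝔤) : ⁅x, w⁆ ∈ lowerSpan K (R : 𝔤) w := by
  have hx : x ∈ ⨆ n : ℤ, degreeSpace 𝔤 (R : 𝔤) (n : K) := hR.iSup_eq_top ▸ Submodule.mem_top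
  induction hx using Submodule.iSup_induction' with
  | zero => simp only [zero_lie, zero_mem]
  | add x y _ _ hx hy => rw [add_lie]; exact add_mem hx hy
  | mem n x hx =>
    rcases lt_trichotomy n 0 with hn | rfl | hn
    · exact lie_mem_lowerSpan_of_neg hn hx (mem_lowerSpan_self _ w)
    · have hxH : x ∈ H := by rwa [Int.cast_zero, hR.degreeSpace_zero] at hx
      rw [hw.lie_eq_smul ⟨x, hxH⟩]
      exact Submodule.smul_mem _ _ (mem_lowerSpan_self _ w)
    · rw [hw.lie_eq_zero hn hx]
      exact zero_mem _

variable [LieModule K 𝔤 M]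

theorem self_mem_degreeSpace (hw : IsHighestWeightVector_s7 H R μ w) :
    w ∈ degreeSpace M (R : 𝔤) (μ R) :=
  mem_degreeSpace.mpr (hw.lie_eq_smul R)

theorem lie_mem_lowerSpan (hw : IsHighestWeightVector_s7 H R μ w) (hR : IsTriangularGrading H R)
    (x : 𝔤) {s : M} (hs : s ∈ lowerSpan K (R : 𝔤) w) : ⁅x, s⁆ ∈ lowerSpan K (R : 𝔤) w := by
  let S : Submodule K M :=
    lowerSpan K (R : 𝔤) w ⊓ ⨅ x : 𝔤, (lowerSpan K (R : 𝔤) w).comap (toEnd K 𝔤 M x)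
  have mem_S {s : M} : s ∈ S ↔
      s ∈ lowerSpan K (R : 𝔤) w ∧ ∀ x : 𝔤, ⁅x, s⁆ ∈ lowerSpan K (R : 𝔤) w := by
    simp only [S, Submodule.mem_inf, Submodule.mem_iInf, Submodule.mem_comap, toEnd_apply_apply]
  suffices lowerSpan K (R : 𝔤) w ≤ S from (mem_S.mp (this hs)).2 x
  refine lowerSpan_le (mem_S.mpr ⟨mem_lowerSpan_self _ w, hw.lie_self_mem_lowerSpan hR⟩) ?_
  intro n hn y hy s hs
  obtain ⟨hs, hs'⟩ := mem_S.mp hs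
  refine mem_S.mpr ⟨lie_mem_lowerSpan_of_neg hn hy hs, fun x => ?_⟩
  rw [leibniz_lie]
  exact add_mem (hs' _) (lie_mem_lowerSpan_of_neg hn hy (hs' x))

/-- The submodule generated by a highest weight vector. -/
def lowerLieSubmodule (hw : IsHighestWeightVector_s7 H R μ w) (hR : IsTriangularGrading H R) :
    LieSubmodule K 𝔤 M :=
  { lowerSpan K (R : 𝔤) w with lie_mem := hw.lie_mem_lowerSpan hR _ }

theorem lowerSpan_eq_top [IsIrreducible K 𝔤 M] (hw : IsHighestWeightVector_s7 H R μ w)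
    (hR : IsTriangularGrading H R) : lowerSpan K (R : 𝔤) w = ⊤ := by
  have hne : hw.lowerLieSubmodule hR ≠ ⊥ := fun h =>
    hw.ne_zero ((LieSubmodule.eq_bot_iff _).mp h w (mem_lowerSpan_self _ w))
  exact congrArg LieSubmodule.toSubmodule ((eq_bot_or_eq_top _).resolve_left hne)

theorem lowerSpan_le_sup (hw : IsHighestWeightVector_s7 H R μ w) :
    lowerSpan K (R : 𝔤) w ≤
      (K ∙ w) ⊔ ⨆ k : ℕ, degreeSpace M (R : 𝔤) (μ R - (k + 1)) := by
  set B : Submodule K M := ⨆ k : ℕ, degreeSpace M (R : 𝔤) (μ R - (k + 1))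
  refine lowerSpan_le (Submodule.mem_sup_left (Submodule.mem_span_singleton_self w)) ?_
  intro n hn x hx
  obtain ⟨l, rfl⟩ : ∃ l : ℕ, n = -(l + 1) := ⟨(-n - 1).toNat, by lia⟩
  suffices (K ∙ w) ⊔ B ≤ B.comap (toEnd K 𝔤 M x) from
    fun s hs => Submodule.mem_sup_right (this hs)
  refine sup_le ?_ (iSup_le fun k m hm => ?_)
  · rw [Submodule.span_singleton_le_iff_mem]
    refine Submodule.mem_iSup_of_mem l ?_
    rw [show μ R - (l + 1) = ((-(l + 1) : ℤ) : K) + μ R by push_cast; ring]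
    exact lie_mem_degreeSpace hx hw.self_mem_degreeSpace
  · refine Submodule.mem_iSup_of_mem (l + k + 1) ?_
    rw [show μ R - ((l + k + 1 : ℕ) + 1) = ((-(l + 1) : ℤ) : K) + (μ R - (k + 1)) by
      push_cast; ring]
    exact lie_mem_degreeSpace hx hm

theorem degreeSpace_inf_lowerSpan_le [CharZero K] (hw : IsHighestWeightVector_s7 H R μ w) :
    degreeSpace M (R : 𝔤) (μ R) ⊓ lowerSpan K (R : 𝔤) w ≤ K ∙ w := by
  set B : Submodule K M := ⨆ k : ℕ, degreeSpace M (R : 𝔤) (μ R - (k + 1))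
  have hline : (K ∙ w) ≤ degreeSpace M (R : 𝔤) (μ R) :=
    (Submodule.span_singleton_le_iff_mem _ _).mpr hw.self_mem_degreeSpace
  have hB : Disjoint (degreeSpace M (R : 𝔤) (μ R)) B :=
    disjoint_eigenspace_iSup _ fun k => by simpa using Nat.cast_add_one_ne_zero (R := K) k
  calc degreeSpace M (R : 𝔤) (μ R) ⊓ lowerSpan K (R : 𝔤) w
      ≤ ((K ∙ w) ⊔ B) ⊓ degreeSpace M (R : 𝔤) (μ R) :=
        le_inf (inf_le_right.trans hw.lowerSpan_le_sup) inf_le_left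
    _ = (K ∙ w) ⊔ B ⊓ degreeSpace M (R : 𝔤) (μ R) := sup_inf_assoc_of_le B hline
    _ = K ∙ w := by rw [inf_comm, hB.eq_bot, sup_bot_eq]

theorem exists_degree_eq_sub [IsIrreducible K 𝔤 M] (hw : IsHighestWeightVector_s7 H R μ w)
    (hR : IsTriangularGrading H R) {a : K} (ha : degreeSpace M (R : 𝔤) a ≠ ⊥) :
    ∃ k : ℕ, a = μ R - k := by
  have htop : ⨆ k : ℕ, degreeSpace M (R : 𝔤) (μ R - k) = ⊤ := by
    refine top_le_iff.mp ((hw.lowerSpan_eq_top hR).ge.trans (hw.lowerSpan_le_sup.trans ?_))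
    refine sup_le ?_ (iSup_le fun k => le_iSup_of_le (k + 1) (by rw [Nat.cast_succ]))
    rw [Submodule.span_singleton_le_iff_mem]
    exact Submodule.mem_iSup_of_mem 0 (by simpa using hw.self_mem_degreeSpace)
  by_contra! h
  exact ha (disjoint_top.mp (htop ▸ disjoint_eigenspace_iSup _ fun k => (h k).symm))

/-- `𝔰𝔩₂`-theory: if `F` lowers the degree by one in the principal triple, then a suitable
`F ^ n w` is a nonzero vector of degree `-μ(R)`. -/
theorem degreeSpace_neg_ne_bot [CharZero K] [FiniteDimensional K M]
    (hw : IsHighestWeightVector_s7 H R μ w) (hR : IsPrincipalGrading H R) :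
    degreeSpace M (R : 𝔤) (-μ R) ≠ ⊥ := by
  obtain rfl | hR0 := eq_or_ne R 0
  · refine Submodule.ne_bot_iff _ |>.mpr ⟨w, ?_, hw.ne_zero⟩
    simpa only [map_zero, neg_zero] using hw.self_mem_degreeSpace
  obtain ⟨e, he, f, hf, hef⟩ := hR.exists_sl2
  rw [mem_degreeSpace] at he hf
  have htriple : IsSl2Triple ((2 : K) • (R : 𝔤)) e f :=
    { h_ne_zero := smul_ne_zero two_ne_zero (by simpa using hR0)
      lie_e_f := hef
      lie_h_e_nsmul := by rw [smul_lie, he, one_smul, ofNat_smul_eq_nsmul]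
      lie_h_f_nsmul := by rw [smul_lie, hf, neg_smul, one_smul, smul_neg, ofNat_smul_eq_nsmul] }
  have hprim : htriple.HasPrimitiveVectorWith w (2 * μ R) :=
    { ne_zero := hw.ne_zero
      lie_h := by rw [smul_lie, hw.lie_eq_smul, smul_smul]
      lie_e := hw.lie_eq_zero one_pos (by rwa [mem_degreeSpace, Int.cast_one]) }
  obtain ⟨n, hn⟩ := hprim.exists_nat
  refine Submodule.ne_bot_iff _ |>.mpr
    ⟨_, ?_, hprim.pow_toEnd_f_ne_zero_of_eq_nat hn le_rfl⟩
  rw [mem_degreeSpace]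
  apply smul_right_injective _ (two_ne_zero (α := K))
  dsimp only
  rw [← smul_lie, hprim.lie_h_pow_toEnd_f, ← hn, smul_smul]
  congr 1
  ring

theorem apply_eq_neg_apply [CharZero K] [FiniteDimensional K M] [IsIrreducible K 𝔤 M]
    (hR : IsPrincipalGrading H R) {ν : Dual K H} {c : M}
    (hw : IsHighestWeightVector_s7 H R μ w) (hc : IsHighestWeightVector_s7 H (-R) ν c) :
    μ R = -ν R := by
  obtain ⟨k, hk⟩ := hw.exists_degree_eq_sub hR.toIsTriangularGrading (a := -ν R) <| by
    simpa [degreeSpace_neg] using hc.degreeSpace_neg_ne_bot hR.neg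
  obtain ⟨l, hl⟩ := hc.exists_degree_eq_sub hR.neg.toIsTriangularGrading (a := μ R) <| by
    simpa [degreeSpace_neg] using hw.degreeSpace_neg_ne_bot hR
  rw [map_neg] at hl
  have hkl : ((k + l : ℕ) : K) = 0 := by push_cast; linear_combination hk + hl
  obtain rfl : l = 0 := by have := Nat.cast_eq_zero.mp hkl; lia
  simpa using hl

end IsHighestWeightVector_s7

variable [LieModule K 𝔤 M]

/-- The part of `M` of degree `c`, as a module over the degree-zero subalgebra `H`. -/
def degreeLieSubmodule [IsLieAbelian H] (R : H) (c : K) : LieSubmodule K H M where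
  __ := degreeSpace M (R : 𝔤) c
  lie_mem {h m} hm := by
    have hh : (h : 𝔤) ∈ degreeSpace 𝔤 (R : 𝔤) (0 : K) := by
      rw [mem_degreeSpace, zero_smul]
      exact congrArg Subtype.val (trivial_lie_zero H H R h)
    have hhm := lie_mem_degreeSpace hh hm
    rwa [zero_add] at hhm

theorem exists_isHighestWeightVector [IsAlgClosed K] [CharZero K] [FiniteDimensional K M]
    [Nontrivial M] [IsLieAbelian H] (R : H) :
    ∃ (μ : Dual K H) (w : M), IsHighestWeightVector_s7 H R μ w := by
  obtain ⟨a, ha, hmax⟩ :=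
    exists_hasEigenvalue_forall_not_hasEigenvalue_add (toEnd K 𝔤 M (R : 𝔤))
  let E : LieSubmodule K H M := degreeLieSubmodule R a
  have : Nontrivial E := Submodule.nontrivial_iff_ne_bot.mpr ha
  have : FiniteDimensional K E := inferInstanceAs (FiniteDimensional K (degreeSpace M (R : 𝔤) a))
  obtain ⟨μ, hμ⟩ := exists_nontrivial_weightSpace_of_isSolvable K H E
  obtain ⟨⟨⟨w, hwa⟩, hwμ⟩, hw0⟩ := exists_ne (0 : weightSpace E μ)
  rw [mem_weightSpace] at hwμ
  refine ⟨μ, w, ?_, fun h => congrArg Subtype.val (hwμ h), ?_⟩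
  · simpa using hw0
  · intro n hn x hx
    lift n to ℕ using hn.le
    have hbot : degreeSpace M (R : 𝔤) (a + n) = ⊥ :=
      not_not.mp (hmax n (by exact_mod_cast hn))
    have hxw := lie_mem_degreeSpace hx hwa
    rwa [add_comm, Int.cast_natCast, hbot, Submodule.mem_bot] at hxw

end HighestWeight

section Irreducible

variable {K 𝔤 V M : Type*} [CommRing K] [LieRing 𝔤]
  [AddCommGroup V] [Module K V] [LieRingModule 𝔤 V]
  [AddCommGroup M] [Module K M] [LieRingModule 𝔤 M]

/-- The equivariant isomorphism defined by a bijective homomorphism of Lie modules. -/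
noncomputable def lieModuleEquivOfBijective (f : V →ₗ⁅K,𝔤⁆ M) (hf : Function.Bijective f) :
    V ≃ₗ⁅K,𝔤⁆ M :=
  { LinearEquiv.ofBijective (f : V →ₗ[K] M) hf, f with }

theorem injective_of_isIrreducible [IsIrreducible K 𝔤 V] {f : V →ₗ⁅K,𝔤⁆ M} (hf : f ≠ 0) :
    Function.Injective f := by
  refine f.ker_eq_bot.mp ((eq_bot_or_eq_top f.ker).resolve_right fun h => hf ?_)
  ext v
  exact f.mem_ker.mp (h ▸ LieSubmodule.mem_top v)

theorem surjective_of_isIrreducible [IsIrreducible K 𝔤 M] {f : V →ₗ⁅K,𝔤⁆ M} (hf : f ≠ 0) :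
    Function.Surjective f := by
  refine f.range_eq_top.mp ((eq_bot_or_eq_top f.range).resolve_left fun h => hf ?_)
  ext v
  exact (LieSubmodule.mem_bot _).mp (h ▸ f.mem_range _ |>.mpr ⟨v, rfl⟩)

end Irreducible

section Prod

variable {K 𝔤 V M : Type*} [CommRing K] [LieRing 𝔤]
  [AddCommGroup V] [Module K V] [LieRingModule 𝔤 V]
  [AddCommGroup M] [Module K M] [LieRingModule 𝔤 M]

instance prodLieRingModule : LieRingModule 𝔤 (V × M) where
  bracket x y := (⁅x, y.1⁆, ⁅x, y.2⁆)
  add_lie x y m := by ext <;> apply add_lie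
  lie_add x m n := by ext <;> apply lie_add
  leibniz_lie x y m := by ext <;> apply leibniz_lie

theorem lie_prod (x : 𝔤) (y : V × M) : ⁅x, y⁆ = (⁅x, y.1⁆, ⁅x, y.2⁆) := rfl

instance prodLieModule [LieAlgebra K 𝔤] [LieModule K 𝔤 V] [LieModule K 𝔤 M] :
    LieModule K 𝔤 (V × M) where
  smul_lie c x m := by ext <;> apply smul_lie
  lie_smul c x m := by ext <;> apply lie_smul

variable (K 𝔤 V M)

/-- The first projection of a product of Lie modules. -/
def prodFst : V × M →ₗ⁅K,𝔤⁆ V :=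
  { LinearMap.fst K V M with map_lie' := rfl }

/-- The second projection of a product of Lie modules. -/
def prodSnd : V × M →ₗ⁅K,𝔤⁆ M :=
  { LinearMap.snd K V M with map_lie' := rfl }

/-- The inclusion of the second factor of a product of Lie modules. -/
def prodInr : M →ₗ⁅K,𝔤⁆ V × M :=
  { LinearMap.inr K V M with map_lie' := by intro x m; simp [lie_prod] }

end Prod

namespace IsHighestWeightVector_s7

variable {K 𝔤 V M : Type*} [Field K] [LieRing 𝔤] [LieAlgebra K 𝔤]
  [AddCommGroup V] [Module K V] [LieRingModule 𝔤 V]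
  [AddCommGroup M] [Module K M] [LieRingModule 𝔤 M]
  {H : LieSubalgebra K 𝔤} {R : H} {μ : Dual K H} {v : V} {w : M}

protected theorem prod (hv : IsHighestWeightVector_s7 H R μ v) (hw : IsHighestWeightVector_s7 H R μ w) :
    IsHighestWeightVector_s7 H R μ (v, w) where
  ne_zero h := hv.ne_zero (congrArg Prod.fst h)
  lie_eq_smul h := Prod.ext (hv.lie_eq_smul h) (hw.lie_eq_smul h)
  lie_eq_zero hn _ hx := Prod.ext (hv.lie_eq_zero hn hx) (hw.lie_eq_zero hn hx)

variable [LieModule K 𝔤 V] [LieModule K 𝔤 M]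

theorem zero_prod_notMem_lowerSpan [CharZero K] (hv : IsHighestWeightVector_s7 H R μ v)
    (hw : IsHighestWeightVector_s7 H R μ w) : (0, w) ∉ lowerSpan K (R : 𝔤) (v, w) := by
  intro hmem
  have hdeg : ((0, w) : V × M) ∈ degreeSpace (V × M) (R : 𝔤) (μ R) := by
    rw [mem_degreeSpace, lie_prod, lie_zero, hw.lie_eq_smul, Prod.smul_mk, smul_zero]
  obtain ⟨c, hc⟩ := Submodule.mem_span_singleton.mp
    ((hv.prod hw).degreeSpace_inf_lowerSpan_le ⟨hdeg, hmem⟩)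
  have hc0 : c = 0 := (smul_eq_zero.mp (congrArg Prod.fst hc)).resolve_right hv.ne_zero
  exact hw.ne_zero (by simpa [hc0] using (congrArg Prod.snd hc).symm)

/-- The submodule of `V × M` generated by `(v, w)` is the graph of the isomorphism. -/
theorem nonempty_lieModuleEquiv [CharZero K] [IsIrreducible K 𝔤 V] [IsIrreducible K 𝔤 M]
    (hR : IsTriangularGrading H R) (hv : IsHighestWeightVector_s7 H R μ v)
    (hw : IsHighestWeightVector_s7 H R μ w) : Nonempty (V ≃ₗ⁅K,𝔤⁆ M) := by
  let S : LieSubmodule K 𝔤 (V × M) := (hv.prod hw).lowerLieSubmodule hR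
  let vw : S := ⟨(v, w), mem_lowerSpan_self _ _⟩
  let p : S →ₗ⁅K,𝔤⁆ V := (prodFst K 𝔤 V M).comp S.incl
  let q : S →ₗ⁅K,𝔤⁆ M := (prodSnd K 𝔤 V M).comp S.incl
  have hfiber : S.comap (prodInr K 𝔤 V M) = ⊥ :=
    (eq_bot_or_eq_top _).resolve_right fun h =>
      hv.zero_prod_notMem_lowerSpan hw (LieSubmodule.mem_comap.mp (h ▸ LieSubmodule.mem_top w))
  have hp_inj : Function.Injective p := by
    refine p.ker_eq_bot.mp ((LieSubmodule.eq_bot_iff _).mpr ?_)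
    rintro ⟨⟨y, m⟩, hS⟩ (rfl : y = 0)
    have hm : m = 0 := (LieSubmodule.eq_bot_iff _).mp hfiber m hS
    exact Subtype.ext (Prod.ext rfl hm)
  have hp_ne : p ≠ 0 := fun h => hv.ne_zero (LieModuleHom.congr_fun h vw)
  let e : S ≃ₗ⁅K,𝔤⁆ V :=
    lieModuleEquivOfBijective p ⟨hp_inj, surjective_of_isIrreducible hp_ne⟩
  let g : V →ₗ⁅K,𝔤⁆ M := q.comp e.symm.toLieModuleHom
  have hg : g ≠ 0 := fun h => hw.ne_zero <| by
    have hgv : g v = w := congrArg q (e.symm_apply_apply vw)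
    rw [← hgv, h, LieModuleHom.zero_apply]
  exact ⟨lieModuleEquivOfBijective g
    ⟨injective_of_isIrreducible hg, surjective_of_isIrreducible hg⟩⟩

end IsHighestWeightVector_s7

section Dual

variable {K 𝔤 V : Type*} [Field K] [LieRing 𝔤] [LieAlgebra K 𝔤]
  [AddCommGroup V] [Module K V] [LieRingModule 𝔤 V] [LieModule K 𝔤 V]

/-- The vectors annihilated by every functional of a submodule of the dual. -/
def dualCoannihilatorLie (N : LieSubmodule K 𝔤 (Dual K V)) : LieSubmodule K 𝔤 V where
  __ := N.toSubmodule.dualCoannihilator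
  lie_mem {x v} hv := (Submodule.mem_dualCoannihilator _).mpr fun ξ hξ => by
    have := (Submodule.mem_dualCoannihilator v).mp hv ⁅x, ξ⁆ (N.lie_mem hξ)
    rwa [Dual.lie_apply, neg_eq_zero] at this

instance isIrreducible_dual [FiniteDimensional K V] [IsIrreducible K 𝔤 V] :
    IsIrreducible K 𝔤 (Dual K V) := by
  have : Nontrivial V := nontrivial_of_isIrreducible K 𝔤 V
  refine IsIrreducible.mk fun N hN => ?_
  have hN' : N.toSubmodule = (dualCoannihilatorLie N).toSubmodule.dualAnnihilator :=
    Subspace.dualCoannihilator_dualAnnihilator_eq.symm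
  rcases eq_bot_or_eq_top (dualCoannihilatorLie N) with h | h
  · refine LieSubmodule.toSubmodule_injective ?_
    rw [hN', h, LieSubmodule.bot_toSubmodule, Submodule.dualAnnihilator_bot,
      LieSubmodule.top_toSubmodule]
  · refine absurd (LieSubmodule.toSubmodule_injective ?_) hN
    rw [hN', h, LieSubmodule.top_toSubmodule, Submodule.dualAnnihilator_top,
      LieSubmodule.bot_toSubmodule]

theorem IsHighestWeightVector_s7.dual_weight_eq_neg {H : LieSubalgebra K 𝔤} {R : H} {μ ν : Dual K H}
    {v : V} {c : Dual K V} [FiniteDimensional K V] [IsIrreducible K 𝔤 V]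
    (hR : IsTriangularGrading H R) (hv : IsHighestWeightVector_s7 H R μ v)
    (hc : IsHighestWeightVector_s7 H (-R) ν c) : ν = -μ := by
  have hcv : c v ≠ 0 := fun hcv => hv.ne_zero <| by
    have hle : lowerSpan K ((-R : H) : 𝔤) c ≤ LinearMap.ker (Dual.eval K V v) := by
      refine lowerSpan_le hcv fun n hn x hx ξ hξ => ?_
      have hxv : ⁅x, v⁆ = 0 := hv.lie_eq_zero (neg_pos.mpr hn) <| by
        rwa [NegMemClass.coe_neg, degreeSpace_neg, ← Int.cast_neg] at hx
      simp [hxv]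
    rw [hc.lowerSpan_eq_top hR.neg] at hle
    exact (Module.forall_dual_apply_eq_zero_iff K v).mp fun ξ => hle (Submodule.mem_top (x := ξ))
  ext h
  have hh : (ν h + μ h) * c v = 0 := by
    have := LinearMap.congr_fun (hc.lie_eq_smul h) v
    rw [Dual.lie_apply, hv.lie_eq_smul, map_smul] at this
    simp only [smul_eq_mul, LinearMap.smul_apply] at this
    linear_combination -this
  exact eq_neg_of_add_eq_zero_left ((mul_eq_zero.mp hh).resolve_right hcv)

end Dual

section Pairing

variable {K 𝔤 D E A : Type*} [Field K] [LieRing 𝔤] [LieAlgebra K 𝔤]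
  [AddCommGroup D] [Module K D] [LieRingModule 𝔤 D]
  [AddCommGroup E] [Module K E] [LieRingModule 𝔤 E] [LieModule K 𝔤 E]
  [AddCommGroup A] [Module K A] [LieRingModule 𝔤 A] [LieModule K 𝔤 A]
  {H : LieSubalgebra K 𝔤} {R : H} {μ ν : Dual K H} {w : D} {c : E}

/-- If `β w c = 0`, then `β w` vanishes on everything generated from `c` by elements of positive
degree because these kill `w`, and then `β` vanishes since `w` generates `D`. -/
theorem IsHighestWeightVector_s7.pairing_ne_zero [IsIrreducible K 𝔤 D] [IsIrreducible K 𝔤 E]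
    (hR : IsTriangularGrading H R) (hw : IsHighestWeightVector_s7 H R μ w)
    (hc : IsHighestWeightVector_s7 H (-R) ν c) {β : D →ₗ⁅K,𝔤⁆ E →ₗ[K] A} (hβ : β ≠ 0) :
    β w c ≠ 0 := fun hβwc => hw.ne_zero <| by
  have hle : lowerSpan K ((-R : H) : 𝔤) c ≤ LinearMap.ker (β w) := by
    refine lowerSpan_le hβwc fun n hn x hx s hs => ?_
    have hxw : ⁅x, w⁆ = 0 := hw.lie_eq_zero (neg_pos.mpr hn) <| by
      rwa [NegMemClass.coe_neg, degreeSpace_neg, ← Int.cast_neg] at hx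
    have hxs := LieModuleHom.map_lie₂ β x w s
    rw [LinearMap.mem_ker.mp hs, hxw, lie_zero, map_zero, LinearMap.zero_apply, zero_add] at hxs
    exact hxs.symm
  rw [hc.lowerSpan_eq_top hR.neg, top_le_iff, LinearMap.ker_eq_top] at hle
  exact injective_of_isIrreducible hβ (hle.trans (map_zero β).symm)

theorem IsHighestWeightVector_s7.lie_pairing (hw : IsHighestWeightVector_s7 H R μ w)
    (hc : IsHighestWeightVector_s7 H (-R) ν c) (β : D →ₗ⁅K,𝔤⁆ E →ₗ[K] A) (h : H) :
    ⁅(h : 𝔤), β w c⁆ = (μ + ν) h • β w c := by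
  rw [LieModuleHom.map_lie₂, hw.lie_eq_smul, hc.lie_eq_smul, map_smul, map_smul,
    LinearMap.smul_apply, LinearMap.add_apply, add_smul]

theorem IsTriangularGrading.eq_zero_of_lie_eq_smul [IsLieAbelian H] (hR : IsTriangularGrading H R)
    {χ : Dual K H} {z : 𝔤} (hz : z ≠ 0) (hχ : ∀ h : H, ⁅(h : 𝔤), z⁆ = χ h • z) (hχR : χ R = 0) :
    χ = 0 := by
  have hzH : z ∈ H := by
    rw [← LieSubalgebra.mem_toSubmodule, ← hR.degreeSpace_zero, mem_degreeSpace, hχ, hχR]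
  ext h
  have hlie : ⁅(h : 𝔤), z⁆ = 0 := congrArg Subtype.val (trivial_lie_zero H H h ⟨z, hzH⟩)
  exact (smul_eq_zero.mp ((hχ h).symm.trans hlie)).resolve_right hz

theorem nonempty_lieModuleEquiv_dual {V : Type*} [IsAlgClosed K] [CharZero K] [IsLieAbelian H]
    [AddCommGroup V] [Module K V] [LieRingModule 𝔤 V] [LieModule K 𝔤 V] [FiniteDimensional K V]
    [IsIrreducible K 𝔤 V] {v : V}
    (hR : IsPrincipalGrading H R) (hv : IsHighestWeightVector_s7 H R μ v)
    {β : Dual K V →ₗ⁅K,𝔤⁆ Dual K V →ₗ[K] 𝔤} (hβ : β ≠ 0) :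
    Nonempty (V ≃ₗ⁅K,𝔤⁆ Dual K V) := by
  have : Nontrivial (Dual K V) := nontrivial_of_isIrreducible K 𝔤 _
  obtain ⟨μ', w, hw⟩ := exists_isHighestWeightVector (M := Dual K V) R
  obtain ⟨ν, c, hc⟩ := exists_isHighestWeightVector (M := Dual K V) (-R)
  obtain rfl : ν = -μ := hv.dual_weight_eq_neg hR.toIsTriangularGrading hc
  have hdegree : (μ' + -μ) R = 0 := by
    rw [LinearMap.add_apply, hw.apply_eq_neg_apply hR hc, neg_add_cancel]
  have hweight : μ' + -μ = 0 := hR.toIsTriangularGrading.eq_zero_of_lie_eq_smul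
    (hw.pairing_ne_zero hR.toIsTriangularGrading hc hβ) (hw.lie_pairing hc β) hdegree
  obtain rfl : μ' = μ := add_neg_eq_zero.mp hweight
  exact hv.nonempty_lieModuleEquiv hR.toIsTriangularGrading hw

end Pairing

section Contraction

variable {K 𝔤 A V W : Type*} [CommRing K] [LieRing 𝔤] [LieAlgebra K 𝔤]
  [AddCommGroup A] [Module K A] [LieRingModule 𝔤 A] [LieModule K 𝔤 A]
  [AddCommGroup V] [Module K V] [LieRingModule 𝔤 V] [LieModule K 𝔤 V]
  [AddCommGroup W] [Module K W] [LieRingModule 𝔤 W] [LieModule K 𝔤 W]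

variable (K A V W) in
/-- The map sending `T ∈ A ⊗ (V ⊗ W)` to the bilinear map that contracts the last two tensor
factors of `T` with two functionals. -/
noncomputable def contract : A ⊗[K] (V ⊗[K] W) →ₗ[K] Dual K V →ₗ[K] Dual K W →ₗ[K] A :=
  TensorProduct.lcurry (.id K) (Dual K V) (Dual K W) A ∘ₗ
    LinearMap.lcomp K A (TensorProduct.dualDistrib K V W) ∘ₗ
      ((LinearMap.lTensorHom A).compr₂ (TensorProduct.rid K A).toLinearMap).flip

theorem contract_apply (T : A ⊗[K] (V ⊗[K] W)) (ξ : Dual K V) (ω : Dual K W) :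
    contract K A V W T ξ ω =
      TensorProduct.rid K A ((TensorProduct.dualDistrib K V W (ξ ⊗ₜ ω)).lTensor A T) :=
  rfl

theorem contract_tmul (a : A) (v : V) (w : W) (ξ : Dual K V) (ω : Dual K W) :
    contract K A V W (a ⊗ₜ (v ⊗ₜ w)) ξ ω = (ξ v * ω w) • a := by
  simp [contract_apply]

theorem contract_lie (x : 𝔤) (T : A ⊗[K] (V ⊗[K] W)) :
    contract K A V W ⁅x, T⁆ = ⁅x, contract K A V W T⁆ := by
  suffices contract K A V W ∘ₗ toEnd K 𝔤 _ x = toEnd K 𝔤 _ x ∘ₗ contract K A V W from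
    LinearMap.congr_fun this T
  ext a v w ξ ω
  simp only [TensorProduct.AlgebraTensorModule.curry_apply, LinearMap.restrictScalars_self,
    TensorProduct.curry_apply, LinearMap.coe_comp, Function.comp_apply, toEnd_apply_apply,
    TensorProduct.LieModule.lie_tmul_right, TensorProduct.tmul_add, map_add, LinearMap.add_apply,
    contract_tmul, LieHom.lie_apply, LinearMap.sub_apply, lie_smul, Dual.lie_apply, mul_neg,
    neg_smul, sub_neg_eq_add, neg_mul]
  abel

theorem contract_injective [Free K V] [Free K W] : Function.Injective (contract K A V W) := by
  refine (injective_iff_map_eq_zero _).mpr fun T hT => ?_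
  let b := Free.chooseBasis K V
  let c := Free.chooseBasis K W
  refine (TensorProduct.equivFinsuppOfBasisRight (M := A) (b.tensorProduct c)).injective ?_
  ext ⟨i, j⟩
  have hcoord : (b.tensorProduct c).coord (i, j) =
      TensorProduct.dualDistrib K V W (b.coord i ⊗ₜ c.coord j) := by
    ext v w
    simp [mul_comm]
  rw [TensorProduct.equivFinsuppOfBasisRight_apply, hcoord, ← contract_apply, hT, map_zero]
  rfl

variable (K 𝔤 A V W) in
/-- Contraction of the last two tensor factors, as a homomorphism of Lie modules. -/
noncomputable def contractHom :
    A ⊗[K] (V ⊗[K] W) →ₗ⁅K,𝔤⁆ Dual K V →ₗ[K] Dual K W →ₗ[K] A :=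
  { contract K A V W with map_lie' := contract_lie _ _ }

theorem maxTrivSubmodule_tensorProduct_eq_bot_s7 [Free K V] [Free K W]
    (h : ∀ β : Dual K V →ₗ⁅K,𝔤⁆ Dual K W →ₗ[K] A, β = 0) :
    maxTrivSubmodule K 𝔤 (A ⊗[K] (V ⊗[K] W)) = ⊥ := by
  refine (LieSubmodule.eq_bot_iff _).mpr fun T hT => contract_injective ?_
  let T' : maxTrivSubmodule K 𝔤 (Dual K V →ₗ[K] Dual K W →ₗ[K] A) :=
    maxTrivHom (contractHom K 𝔤 A V W) ⟨T, hT⟩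
  have hT' : T' = 0 := maxTrivLinearMapEquivLieModuleHom.injective ((h _).trans (map_zero _).symm)
  exact (congrArg Subtype.val hT').trans (map_zero _).symm

end Contraction

section Invariants

variable {K 𝔤 V : Type*} [Field K] [IsAlgClosed K] [CharZero K]
  [LieRing 𝔤] [LieAlgebra K 𝔤] {H : LieSubalgebra K 𝔤} [IsLieAbelian H] {R : H}
  [AddCommGroup V] [Module K V] [LieRingModule 𝔤 V] [LieModule K 𝔤 V] [FiniteDimensional K V]
  [IsIrreducible K 𝔤 V] {μ : Dual K H} {v : V}

theorem maxTrivSubmodule_adjoint_tensor_eq_bot (hR : IsPrincipalGrading H R)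
    (hv : IsHighestWeightVector_s7 H R μ v) (hV : IsEmpty (V ≃ₗ⁅K,𝔤⁆ Dual K V)) :
    maxTrivSubmodule K 𝔤 (𝔤 ⊗[K] (V ⊗[K] V)) = ⊥ :=
  maxTrivSubmodule_tensorProduct_eq_bot_s7 fun _ => by_contra fun hβ =>
    not_isEmpty_iff.mpr (nonempty_lieModuleEquiv_dual hR hv hβ) hV

end Invariants

theorem isDualPair_of_lieModuleEquiv {V : Type} [AddCommGroup V] [Module ℂ V] [LieRingModule L V]
    [LieModule ℂ L V] (g : V ≃ₗ⁅ℂ,L⁆ Dual ℂ V) : IsDualPair (L := L) V V := by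
  refine ⟨g.toLinearMap, fun w hw => ?_, fun v hv => ?_, fun x w v => ?_⟩
  · exact g.injective ((LinearMap.ext hw).trans (map_zero g).symm)
  · refine (forall_dual_apply_eq_zero_iff ℂ v).mp fun ξ => ?_
    obtain ⟨w, rfl⟩ := g.surjective ξ
    exact hv w
  · simp

section RootSpaces

variable {K 𝔤 : Type*} [Field K] [LieRing 𝔤] [LieAlgebra K 𝔤] [FiniteDimensional K 𝔤]
  {H : LieSubalgebra K 𝔤} [H.IsCartanSubalgebra]

theorem toSubmodule_rootSpace_of_isZero {χ : Weight K H 𝔤} (hχ : χ.IsZero) :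
    (rootSpace H χ).toSubmodule = H.toSubmodule := by
  rw [hχ.eq, rootSpace_zero_eq]
  rfl

variable [IsTriangularizable K H 𝔤]

theorem iSup_rootSpace_eq_top : ⨆ χ : Weight K H 𝔤, (rootSpace H χ).toSubmodule = ⊤ := by
  have h := congrArg LieSubmodule.toSubmodule (iSup_genWeightSpace_eq_top' K H 𝔤)
  rwa [LieSubmodule.iSup_toSubmodule, LieSubmodule.top_toSubmodule] at h

variable [PerfectField K] [IsKilling K 𝔤]

theorem rootSpace_le_degreeSpace (χ : H → K) (R : H) :
    (rootSpace H χ).toSubmodule ≤ degreeSpace 𝔤 (R : 𝔤) (χ R) :=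
  fun _ hx => mem_degreeSpace.mpr (IsKilling.lie_eq_smul_of_mem_rootSpace hx R)

theorem degreeSpace_le_iSup_rootSpace (R : H) (a : K) :
    degreeSpace 𝔤 (R : 𝔤) a ≤ ⨆ (χ : Weight K H 𝔤) (_ : χ R = a), (rootSpace H χ).toSubmodule :=
  eigenspace_le_of_iSup_eq_top _ (fun χ => rootSpace_le_degreeSpace χ R) iSup_rootSpace_eq_top

end RootSpaces

section Height

variable {H : LieSubalgebra ℂ L} [H.IsCartanSubalgebra] {r : ℕ} {α : Fin r → Dual ℂ H} {R : H}

theorem IsBase.exists_height (hα : IsBase H α) (hR : ∀ j, α j R = 1) {χ : Dual ℂ H}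
    (hχ : IsRoot H χ) : ∃ n : ℤ, n ≠ 0 ∧ χ R = n ∧ (0 < n → IsPosRoot H α χ) := by
  have hsum (c : Fin r → ℕ) : (∑ j, (c j : ℂ) • α j) R = (∑ j, c j : ℕ) := by
    simp [LinearMap.sum_apply, hR]
  have hne {c : Fin r → ℕ} (h : ∑ j, c j = 0) : ∑ j, (c j : ℂ) • α j = 0 := by
    refine Finset.sum_eq_zero fun j hj => ?_
    rw [Finset.sum_eq_zero_iff.mp h j hj, Nat.cast_zero, zero_smul]
  obtain ⟨c, hc⟩ | ⟨c, hc⟩ := hα.pos_neg χ hχ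
  · refine ⟨(∑ j, c j : ℕ), fun h => hχ.1 ?_, ?_, fun _ => ⟨hχ, c, hc⟩⟩
    · rw [hc, hne (Int.natCast_eq_zero.mp h)]
    · rw [hc, hsum, Int.cast_natCast]
  · refine ⟨-(∑ j, c j : ℕ), fun h => hχ.1 ?_, ?_, fun h => by lia⟩
    · rw [hc, hne (Int.natCast_eq_zero.mp (neg_eq_zero.mp h)), neg_zero]
    · rw [hc, LinearMap.neg_apply, hsum, Int.cast_neg, Int.cast_natCast]

end Height

section SimpleRoots

variable [FiniteDimensional ℂ L] {H : LieSubalgebra ℂ L} [H.IsCartanSubalgebra]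

theorem isRoot_toLinear {χ : Weight ℂ H L} (hχ : χ.IsNonZero) : IsRoot H χ.toLinear :=
  ⟨Weight.coe_toLinear_ne_zero_iff.mpr hχ, χ.genWeightSpace_ne_bot⟩

variable [IsSemisimple ℂ L]

theorem IsCoroot.exists_eq_smul_cartanEquivDual_symm {χ : Dual ℂ H} {t : H}
    (hχ : rootSpace H ⇑χ ≠ ⊥) (ht : IsCoroot H χ t) :
    ∃ s : ℂ, s ≠ 0 ∧ t = s • (IsKilling.cartanEquivDual H).symm χ := by
  obtain ⟨h2, e, he, f, hf, hef⟩ := ht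
  let χ' : Weight ℂ H L := ⟨⇑χ, hχ⟩
  have hχ' : χ'.toLinear = χ := rfl
  have hmem : t ∈ corootSpace χ' :=
    (mem_corootSpace _).mpr (Submodule.subset_span ⟨e, he, f, hf, hef.symm⟩)
  have ht : t = IsKilling.coroot χ' := IsKilling.eq_coroot_of_mem_corootSpace_of_two χ' hmem h2
  rw [IsKilling.coroot, hχ', ← Nat.cast_smul_eq_nsmul ℂ, smul_smul] at ht
  refine ⟨_, fun hs => ?_, ht⟩
  rw [ht, hs, zero_smul, map_zero] at h2
  exact two_ne_zero h2.symm

variable {r : ℕ} {α : Fin r → Dual ℂ H}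

namespace IsBase

theorem span_range_eq_top (hα : IsBase H α) : Submodule.span ℂ (Set.range α) = ⊤ := by
  rw [eq_top_iff, ← IsKilling.span_weight_eq_top (K := ℂ) (L := L) (H := H), Submodule.span_le]
  rintro _ ⟨χ, rfl⟩
  have hmem (c : Fin r → ℕ) : ∑ j, (c j : ℂ) • α j ∈ Submodule.span ℂ (Set.range α) :=
    Submodule.sum_mem _ fun j _ => Submodule.smul_mem _ _ (Submodule.subset_span ⟨j, rfl⟩)
  by_cases hχ : χ.IsZero
  · exact Weight.coe_toLinear_eq_zero_iff.mpr hχ ▸ zero_mem _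
  · obtain ⟨c, hc⟩ | ⟨c, hc⟩ := hα.pos_neg _ (isRoot_toLinear hχ)
    · exact hc ▸ hmem c
    · exact hc ▸ neg_mem (hmem c)

theorem exists_forall_apply_eq (hα : IsBase H α) (c : Fin r → ℂ) : ∃ t : H, ∀ j, α j t = c j := by
  let b := Basis.mk hα.indep hα.span_range_eq_top.ge
  refine ⟨(evalEquiv ℂ H).symm (b.constr ℂ c), fun j => ?_⟩
  rw [apply_evalEquiv_symm_apply, ← b.constr_basis ℂ c j, Basis.mk_apply]

theorem span_range_coroot_eq_top (hα : IsBase H α) {hc : Fin r → H}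
    (hcoroot : ∀ j, IsCoroot H (α j) (hc j)) : Submodule.span ℂ (Set.range hc) = ⊤ := by
  choose s hs hsc using fun j =>
    (hcoroot j).exists_eq_smul_cartanEquivDual_symm (hα.isRoot j).2
  let φ := (IsKilling.cartanEquivDual (K := ℂ) H).symm
  have hφ : LinearIndependent ℂ (fun j => φ (α j)) :=
    hα.indep.map' φ.toLinearMap φ.ker
  have hli : LinearIndependent ℂ hc := by
    rw [funext hsc]
    exact hφ.units_smul fun j => Units.mk0 (s j) (hs j)
  refine hli.span_eq_top_of_card_eq_finrank' ?_
  rw [← Subspace.dual_finrank_eq, finrank_eq_card_basis (Basis.mk hα.indep hα.span_range_eq_top.ge)]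

theorem rootSpace_sub_eq_bot (hα : IsBase H α) {i j : Fin r} (hij : i ≠ j) :
    rootSpace H ⇑(α i - α j) = ⊥ := by
  by_contra hne
  have hroot : IsRoot H (α i - α j) :=
    ⟨fun h => hij (hα.indep.injective (sub_eq_zero.mp h)), hne⟩
  have hcoord (k : Fin r) : ∃ t : H, (∀ l, α l t = if l = k then 1 else 0) ∧
      ∀ c : Fin r → ℕ, (∑ l, (c l : ℂ) • α l) t = c k := by
    obtain ⟨t, ht⟩ := hα.exists_forall_apply_eq fun l => if l = k then 1 else 0
    exact ⟨t, ht, fun c => by simp [LinearMap.sum_apply, ht]⟩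
  obtain ⟨c, hc⟩ | ⟨c, hc⟩ := hα.pos_neg _ hroot
  · obtain ⟨t, ht, hct⟩ := hcoord j
    have h : (-1 : ℂ) = c j := by
      rw [← hct c, ← hc, LinearMap.sub_apply, ht, ht, if_neg hij, if_pos rfl, zero_sub]
    exact Nat.cast_add_one_ne_zero (R := ℂ) (c j) (by rw [← h, neg_add_cancel])
  · obtain ⟨t, ht, hct⟩ := hcoord i
    have h : (1 : ℂ) = -c i := by
      rw [← hct c, ← LinearMap.neg_apply, ← hc, LinearMap.sub_apply, ht, ht, if_pos rfl,
        if_neg hij.symm, sub_zero]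
    exact Nat.cast_add_one_ne_zero (R := ℂ) (c i) (by rw [h, add_neg_cancel])

theorem isTriangularGrading (hα : IsBase H α) {R : H} (hR : ∀ j, α j R = 1) :
    IsTriangularGrading H R where
  iSup_eq_top := by
    refine top_le_iff.mp (iSup_rootSpace_eq_top (H := H) ▸ iSup_le fun χ => ?_)
    obtain ⟨n, hn⟩ : ∃ n : ℤ, χ R = n := by
      by_cases hχ : χ.IsZero
      · exact ⟨0, by rw [hχ.eq, Pi.zero_apply, Int.cast_zero]⟩
      · obtain ⟨n, -, hn, -⟩ := hα.exists_height hR (isRoot_toLinear hχ)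
        exact ⟨n, hn⟩
    exact le_iSup_of_le n (hn ▸ rootSpace_le_degreeSpace χ R)
  degreeSpace_zero := by
    apply le_antisymm
    · refine (degreeSpace_le_iSup_rootSpace R 0).trans (iSup₂_le fun χ hχR => ?_)
      by_cases hχ : χ.IsZero
      · exact (toSubmodule_rootSpace_of_isZero hχ).le
      · obtain ⟨n, hn, hχn, -⟩ := hα.exists_height hR (isRoot_toLinear hχ)
        exact absurd (hχn.symm.trans hχR) (Int.cast_ne_zero.mpr hn)
    · intro x hx
      rw [mem_degreeSpace, zero_smul]
      exact congrArg Subtype.val (trivial_lie_zero H H R ⟨x, hx⟩)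

theorem degreeSpace_le_iSup_isPosRoot (hα : IsBase H α) {R : H} (hR : ∀ j, α j R = 1) {n : ℤ}
    (hn : 0 < n) : degreeSpace L (R : L) (n : ℂ) ≤
      ⨆ (χ : Dual ℂ H) (_ : IsPosRoot H α χ), (rootSpace H ⇑χ).toSubmodule := by
  refine (degreeSpace_le_iSup_rootSpace R n).trans (iSup₂_le fun χ hχR => ?_)
  have hχ : χ.IsNonZero := by
    intro hχ
    rw [hχ.eq, Pi.zero_apply, eq_comm, Int.cast_eq_zero] at hχR
    exact hn.ne' hχR
  obtain ⟨m, -, hχm, hm⟩ := hα.exists_height hR (isRoot_toLinear hχ)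
  obtain rfl : m = n := Int.cast_injective (hχm.symm.trans hχR)
  exact le_iSup₂_of_le χ.toLinear (hm hn) le_rfl

theorem exists_isHighestWeightVector (hα : IsBase H α) {R : H} (hR : ∀ j, α j R = 1) {μ : Dual ℂ H}
    {V : Type} [AddCommGroup V] [Module ℂ V] [LieRingModule L V] [LieModule ℂ L V]
    (hV : IsHWIrrep H α μ V) : ∃ v : V, IsHighestWeightVector_s7 H R μ v := by
  obtain ⟨-, v, hv0, hvμ, hv⟩ := hV
  refine ⟨v, hv0, hvμ, fun hn x hx => ?_⟩
  have hle : ⨆ (χ : Dual ℂ H) (_ : IsPosRoot H α χ), (rootSpace H ⇑χ).toSubmodule ≤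
      LinearMap.ker ((toEnd ℂ L V : L →ₗ[ℂ] End ℂ V).flip v) :=
    iSup₂_le fun χ hχ e he => hv χ hχ e he
  exact hle (hα.degreeSpace_le_iSup_isPosRoot hR hn hx)

theorem lie_eq_zero_of_mem_rootSpace (hα : IsBase H α) {i j : Fin r} (hij : i ≠ j) {e f : L}
    (he : e ∈ rootSpace H ⇑(α i)) (hf : f ∈ rootSpace H ⇑(-α j)) : ⁅e, f⁆ = 0 := by
  have hef : ⁅e, f⁆ ∈ rootSpace H ⇑(α i - α j) := by
    rw [sub_eq_add_neg]
    exact lie_mem_genWeightSpace_of_mem_genWeightSpace he hf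
  rwa [hα.rootSpace_sub_eq_bot hij, LieSubmodule.mem_bot] at hef

theorem isPrincipalGrading (hα : IsBase H α) {hc : Fin r → H}
    (hcoroot : ∀ j, IsCoroot H (α j) (hc j)) {R : H} (hR : ∀ j, α j R = 1) :
    IsPrincipalGrading H R where
  toIsTriangularGrading := hα.isTriangularGrading hR
  exists_sl2 := by
    obtain ⟨c, hcR⟩ := (Submodule.mem_span_range_iff_exists_fun ℂ (v := hc)).mp
      (hα.span_range_coroot_eq_top hcoroot ▸ Submodule.mem_top (x := R))
    choose e he f hf hef using fun j => (hcoroot j).2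
    have hdeg {χ : Dual ℂ H} {a : ℂ} (ha : χ R = a) {x : L} (hx : x ∈ rootSpace H ⇑χ) :
        x ∈ degreeSpace L (R : L) a := ha ▸ rootSpace_le_degreeSpace χ R hx
    refine ⟨∑ j, e j, sum_mem fun j _ => hdeg (hR j) (he j), ∑ j, (2 * c j) • f j,
      sum_mem fun j _ => Submodule.smul_mem _ _ (hdeg (by simp [hR]) (hf j)), ?_⟩
    have hdiag (i : Fin r) : ⁅e i, ∑ j, (2 * c j) • f j⁆ = (2 * c i) • (hc i : L) := by
      rw [lie_sum, Finset.sum_eq_single i, lie_smul, hef]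
      · intro j _ hji
        rw [lie_smul, hα.lie_eq_zero_of_mem_rootSpace hji.symm (he i) (hf j), smul_zero]
      · simp
    rw [sum_lie, ← hcR]
    simp [hdiag, Finset.smul_sum, smul_smul]

end IsBase

end SimpleRoots

/-- If `μ ≠ μ̄`, i.e. `V_μ` is not self-dual, then the `𝔤`-invariant
subspaces of `adj(𝔤) ⊗ S²V_μ` and of `adj(𝔤) ⊗ Λ²V_μ` are both zero. -/
theorem statement7
    {L : Type} [LieRing L] [LieAlgebra ℂ L] [FiniteDimensional ℂ L]
    [LieAlgebra.IsSemisimple ℂ L]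
    (H : LieSubalgebra ℂ L) [H.IsCartanSubalgebra]
    {r : ℕ} (α : Fin r → Module.Dual ℂ H) (hc : Fin r → H)
    (hbase : IsBase H α) (hcoroot : ∀ j, IsCoroot H (α j) (hc j))
    (μ : Module.Dual ℂ H) (hμ : IsDomInt hc μ)
    (Vμ : Type) [AddCommGroup Vμ] [Module ℂ Vμ] [LieRingModule L Vμ]
    [LieModule ℂ L Vμ] [FiniteDimensional ℂ Vμ]
    (hVμ : IsHWIrrep H α μ Vμ)
    (hnotselfdual : ¬ IsDualPair (L := L) Vμ Vμ) :
    symSquareInvariants L Vμ = ⊥ ∧ altSquareInvariants L Vμ = ⊥ := by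
  obtain ⟨R, hR⟩ := hbase.exists_forall_apply_eq 1
  obtain ⟨v, hv⟩ := hbase.exists_isHighestWeightVector hR hVμ
  have : IsIrreducible ℂ L Vμ := hVμ.1
  have hdual : IsEmpty (Vμ ≃ₗ⁅ℂ,L⁆ Dual ℂ Vμ) :=
    ⟨fun g => hnotselfdual (isDualPair_of_lieModuleEquiv g)⟩
  have hbot : maxTrivSubmodule ℂ L (L ⊗[ℂ] (Vμ ⊗[ℂ] Vμ)) = ⊥ :=
    maxTrivSubmodule_adjoint_tensor_eq_bot (hbase.isPrincipalGrading hcoroot hR) hv hdual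
  simp only [symSquareInvariants, altSquareInvariants, hbot, LieSubmodule.bot_toSubmodule,
    bot_inf_eq, and_self]

end AdjPaper
end
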